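/- Suppose Assumptions (K) and (A_p) hold and let ε₀ = R/(8M). For every positive integer n and every ε > 0 with (n+1)ε ≤ ε₀, the defect δ^[n] of the stroboscopic averaging iteration is p times continuously differentiable with respect to θ and satisfies ‖δ^[n]‖_{R,p} ≤ 2M·(2·𝒬_p·(n+1)·ε/ε₀)^n, where 𝒬_p = 5 + 2^{p+1} e^{5/2} p!. -/

import Mathlib

open Set

/-- The set `K_ρ = {u + ũ : u ∈ closure K, ‖ũ‖ ≤ ρ}` inside the complexification `Xc` of `X`. -/
def Kset {X Xc : Type*} [NormedAddCommGroup X] [NormedSpace ℝ X]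
    [NormedAddCommGroup Xc] [NormedSpace ℂ Xc]
    (ι : X →ₗᵢ[ℝ] Xc) (K : Set X) (ρ : ℝ) : Set Xc :=
  {z | ∃ u ∈ closure K, ∃ w : Xc, ‖w‖ ≤ ρ ∧ z = ι u + w}

/-- θ-average `⟨g⟩(u) = ∫₀¹ g_θ(u) dθ` of a 1-periodic map. -/
noncomputable def thAvg {Xc : Type*} [NormedAddCommGroup Xc] [NormedSpace ℂ Xc]
    (g : ℝ → Xc → Xc) (u : Xc) : Xc :=
  ∫ θ in (0:ℝ)..1, g θ u

/-- Averaged vector field `F(u) = (∂_u⟨φ⟩(u))⁻¹ ⟨f∘φ⟩(u)`. -/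
noncomputable def aveField {Xc : Type*} [NormedAddCommGroup Xc] [NormedSpace ℂ Xc]
    (f φ : ℝ → Xc → Xc) (u : Xc) : Xc :=
  (fderiv ℂ (thAvg φ) u).inverse (thAvg (fun θ v => f θ (φ θ v)) u)

/-- The stroboscopic averaging iteration: `Φ^[0] = id` and
`Φ^[k+1]_θ(u) = u + ε ∫₀^θ ( f_τ(Φ^[k]_τ(u)) − ∂_uΦ^[k]_τ(u) F^[k](u) ) dτ`. -/
noncomputable def PhiIter {Xc : Type*} [NormedAddCommGroup Xc] [NormedSpace ℂ Xc]
    (f : ℝ → Xc → Xc) (ε : ℝ) : ℕ → ℝ → Xc → Xc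
  | 0 => fun _ u => u
  | k+1 => fun θ u => u + ε • ∫ τ in (0:ℝ)..θ,
      (f τ (PhiIter f ε k τ u) -
        fderiv ℂ (PhiIter f ε k τ) u (aveField f (PhiIter f ε k) u))

/-- The defect `δ^[k]_θ(u) = (1/ε)∂_θΦ^[k]_θ(u) + ∂_uΦ^[k]_θ(u) F^[k](u) − f_θ(Φ^[k]_θ(u))`. -/
noncomputable def defect {Xc : Type*} [NormedAddCommGroup Xc] [NormedSpace ℂ Xc]
    (f : ℝ → Xc → Xc) (ε : ℝ) (k : ℕ) (θ : ℝ) (u : Xc) : Xc :=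
  (1/ε) • deriv (fun τ => PhiIter f ε k τ u) θ
    + fderiv ℂ (PhiIter f ε k θ) u (aveField f (PhiIter f ε k) u)
    - f θ (PhiIter f ε k θ u)


namespace Strob

open Set Metric Filter Topology

universe u


variable {E F : Type u} [NormedAddCommGroup E] [NormedSpace ℂ E]
  [NormedAddCommGroup F] [NormedSpace ℂ F]

/-- Cauchy estimate on balls of a complex normed space. -/
theorem cauchy_fderiv {g : E → F} {x : E} {r C : ℝ} (hr : 0 < r) (hC : 0 ≤ C)
    (hd : DifferentiableOn ℂ g (ball x r)) (hb : ∀ z ∈ ball x r, ‖g z‖ ≤ C) :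
    ‖fderiv ℂ g x‖ ≤ C / r := by
  refine ContinuousLinearMap.opNorm_le_bound _ (by positivity) fun v => ?_
  have hdx : DifferentiableAt ℂ g x := hd.differentiableAt (ball_mem_nhds x hr)
  by_cases hv : ‖v‖ = 0
  · have : v = 0 := norm_eq_zero.1 hv
    simp [this]
  have hv : 0 < ‖v‖ := lt_of_le_of_ne (norm_nonneg _) (Ne.symm hv)
  -- line restriction
  have hline : HasDerivAt (fun t : ℂ => g (x + t • v)) (fderiv ℂ g x v) 0 := by
    have h1 : HasDerivAt (fun t : ℂ => x + t • v) v 0 := by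
      simpa using ((hasDerivAt_id (0:ℂ)).smul_const v).const_add x
    have h2 : HasFDerivAt g (fderiv ℂ g x) (x + (0:ℂ) • v) := by simpa using hdx.hasFDerivAt
    exact h2.comp_hasDerivAt 0 h1
  rw [← hline.deriv]
  have key : ∀ s ∈ Ioo 0 r, ‖deriv (fun t : ℂ => g (x + t • v)) 0‖ ≤ C / (s / ‖v‖) := by
    intro s hs
    have hmaps : ∀ t ∈ closedBall (0:ℂ) (s / ‖v‖), x + t • v ∈ ball x r := by
      intro t ht
      rw [mem_closedBall_zero_iff, le_div_iff₀ hv] at ht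
      rw [mem_ball_iff_norm, add_sub_cancel_left, norm_smul]
      exact ht.trans_lt hs.2
    have hs' : 0 < s / ‖v‖ := div_pos hs.1 hv
    refine Complex.norm_deriv_le_of_forall_mem_sphere_norm_le hs' ?_ ?_
    · apply DifferentiableOn.diffContOnCl
      rw [closure_ball _ hs'.ne']
      exact hd.comp (by fun_prop) hmaps
    · intro z hz
      exact hb _ (hmaps z (sphere_subset_closedBall hz))
  have hlim : Tendsto (fun s : ℝ => C / (s / ‖v‖)) (𝓝[<] r) (𝓝 (C / (r / ‖v‖))) := by
    apply Tendsto.mono_left _ nhdsWithin_le_nhds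
    apply ContinuousAt.tendsto
    apply ContinuousAt.div (by fun_prop) (by fun_prop)
    positivity
  have := ge_of_tendsto hlim (by
    filter_upwards [Ioo_mem_nhdsLT hr] with s hs using key s hs)
  calc _ ≤ _ := this
    _ = _ := by field_simp

/-- Lipschitz bound via Cauchy. -/
theorem cauchy_lip {g : E → F} {c : E} {a r C : ℝ} (hr : 0 < r) (hC : 0 ≤ C)
    (hd : DifferentiableOn ℂ g (ball c (a + r))) (hb : ∀ z ∈ ball c (a + r), ‖g z‖ ≤ C)
    {x y : E} (hx : x ∈ closedBall c a) (hy : y ∈ closedBall c a) :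
    ‖g y - g x‖ ≤ C / r * ‖y - x‖ := by
  have hsub : ∀ z ∈ closedBall c a, ball z r ⊆ ball c (a + r) := by
    intro z hz w hw
    rw [mem_ball] at *
    rw [mem_closedBall] at hz
    calc dist w c ≤ dist w z + dist z c := dist_triangle _ _ _
      _ < a + r := by linarith
  refine (convex_closedBall c a).norm_image_sub_le_of_norm_fderiv_le (𝕜 := ℂ) ?_ ?_ hx hy
  · intro z hz
    exact (hd.mono (hsub z hz)).differentiableAt (ball_mem_nhds z hr)
  · intro z hz
    exact cauchy_fderiv hr hC (hd.mono (hsub z hz)) (fun w hw => hb w (hsub z hz hw))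

/-- The derivative is Lipschitz. -/
theorem cauchy_fderiv_lip {g : E → F} {c : E} {r C : ℝ} (hr : 0 < r) (hC : 0 ≤ C)
    (hd : DifferentiableOn ℂ g (ball c (3 * r))) (hb : ∀ z ∈ ball c (3 * r), ‖g z‖ ≤ C)
    {x y : E} (hx : x ∈ ball c r) (hy : y ∈ ball c r) :
    ‖fderiv ℂ g y - fderiv ℂ g x‖ ≤ C / r / r * ‖y - x‖ := by
  have hsub : ∀ z ∈ ball c r, ball z r ⊆ ball c (2 * r) := by
    intro z hz w hw
    rw [mem_ball] at *
    calc dist w c ≤ dist w z + dist z c := dist_triangle _ _ _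
      _ < 2 * r := by linarith
  have hsub2 : ball c (2*r) ⊆ ball c (3 * r) := ball_subset_ball (by linarith)
  have hda : ∀ z ∈ ball c (2 * r), DifferentiableAt ℂ g z := fun z hz =>
    hd.differentiableAt (isOpen_ball.mem_nhds (hsub2 hz))
  have hsh : ∀ z ∈ ball x r, z + (y - x) ∈ ball c (2 * r) := by
    intro z hz
    apply hsub y hy
    rw [mem_ball_iff_norm] at *
    convert hz using 2
    abel
  have e : fderiv ℂ (fun z => g (z + (y - x)) - g z) x = fderiv ℂ g y - fderiv ℂ g x := by
    have h1 : DifferentiableAt ℂ g (x + (y - x)) := hda _ (hsh x (mem_ball_self hr))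
    rw [fderiv_fun_sub, fderiv_comp_add_right]
    · simp
    · exact h1.comp x (by fun_prop)
    · exact hda x (hsub x hx (mem_ball_self hr))
  rw [← e]
  have : C / r / r * ‖y - x‖ = (C / r * ‖y - x‖) / r := by ring
  rw [this]
  apply cauchy_fderiv hr (by positivity)
  · intro z hz
    apply DifferentiableAt.differentiableWithinAt
    exact DifferentiableAt.sub ((hda _ (hsh z hz)).comp z (by fun_prop)) (hda z (hsub x hx hz))
  · intro z hz
    have h3 : 3 * r = 2 * r + r := by ring
    have := cauchy_lip (c := c) (a := 2 * r) hr hC (g := g) (h3 ▸ hd) (h3 ▸ hb)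
      (ball_subset_closedBall (hsub x hx hz))
      (ball_subset_closedBall (hsh z hz))
    simpa using this

/-- Second order Taylor estimate. -/
theorem cauchy_taylor {g : E → F} {c : E} {r C : ℝ} (hr : 0 < r) (hC : 0 ≤ C)
    (hd : DifferentiableOn ℂ g (ball c (3 * r))) (hb : ∀ z ∈ ball c (3 * r), ‖g z‖ ≤ C)
    {y : E} (hy : y ∈ ball c r) :
    ‖g y - g c - fderiv ℂ g c (y - c)‖ ≤ C / r / r * ‖y - c‖ * ‖y - c‖ := by
  have hyr : ‖y - c‖ < r := by rwa [mem_ball_iff_norm] at hy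
  have hsub : closedBall c ‖y - c‖ ⊆ ball c r := closedBall_subset_ball hyr
  refine (convex_closedBall c ‖y - c‖).norm_image_sub_le_of_norm_fderiv_le' (𝕜 := ℂ) ?_ ?_ ?_ ?_
  · intro z hz
    exact hd.differentiableAt (isOpen_ball.mem_nhds (ball_subset_ball (by linarith) (hsub hz)))
  · intro z hz
    have := cauchy_fderiv_lip hr hC hd hb (mem_ball_self hr) (hsub hz)
    refine this.trans ?_
    have : ‖z - c‖ ≤ ‖y - c‖ := by rwa [mem_closedBall_iff_norm] at hz
    gcongr
  · simp
  · rw [mem_closedBall_iff_norm]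

/-- A function complex differentiable on an open set is locally bounded. -/
theorem exists_bound {g : E → F} {V : Set E} (hV : IsOpen V) (hd : DifferentiableOn ℂ g V)
    {x : E} (hx : x ∈ V) : ∃ r > 0, ∃ C ≥ 0, ball x (3 * r) ⊆ V ∧ ∀ z ∈ ball x (3 * r), ‖g z‖ ≤ C := by
  have hc : ContinuousAt g x := (hd.differentiableAt (hV.mem_nhds hx)).continuousAt
  have h1 : ∀ᶠ z in 𝓝 x, ‖g z‖ < ‖g x‖ + 1 := hc.norm.eventually_lt_const (by linarith)
  obtain ⟨r, hr, h⟩ := Metric.mem_nhds_iff.1 (inter_mem h1 (hV.mem_nhds hx))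
  refine ⟨r / 3, by positivity, ‖g x‖ + 1, by positivity, ?_, ?_⟩
  · rw [mul_div_cancel₀ _ (by norm_num)]; exact fun z hz => (h hz).2
  · rw [mul_div_cancel₀ _ (by norm_num)]; exact fun z hz => (h hz).1.le

theorem fderiv_continuousOn {g : E → F} {V : Set E} (hV : IsOpen V) (hd : DifferentiableOn ℂ g V) :
    ContinuousOn (fderiv ℂ g) V := by
  intro x hx
  apply ContinuousAt.continuousWithinAt
  obtain ⟨r, hr, C, hC, hs, hb⟩ := exists_bound hV hd hx
  rw [ContinuousAt, tendsto_iff_norm_sub_tendsto_zero]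
  have h0 : Tendsto (fun y => C / r / r * ‖y - x‖) (𝓝 x) (𝓝 0) := by
    have : Continuous (fun y => C / r / r * ‖y - x‖) := by fun_prop
    simpa using this.tendsto x
  refine squeeze_zero' (Eventually.of_forall fun _ => norm_nonneg _) ?_ h0
  filter_upwards [ball_mem_nhds x hr] with y hy
  exact cauchy_fderiv_lip hr hC (hd.mono hs) hb (mem_ball_self hr) hy

theorem fderiv_apply_differentiableAt [CompleteSpace F] {g : E → F} {V : Set E} (hV : IsOpen V)
    (hd : DifferentiableOn ℂ g V) (v : E) {x : E} (hx : x ∈ V) :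
    DifferentiableAt ℂ (fun y => fderiv ℂ g y v) x := by
  obtain ⟨r, hr, C, hC, hs, hb⟩ := exists_bound hV hd hx
  set ρ : ℝ := r / (‖v‖ + 1) with hρ
  have hρ0 : 0 < ρ := by positivity
  have hρv : ∀ t ∈ closedBall (0:ℂ) ρ, ‖t • v‖ ≤ r := by
    intro t ht
    rw [mem_closedBall_zero_iff] at ht
    rw [norm_smul]
    calc ‖t‖ * ‖v‖ ≤ ρ * (‖v‖ + 1) := by gcongr; linarith
      _ = r := by rw [hρ]; field_simp
  have hmem : ∀ y ∈ ball x r, ∀ t ∈ closedBall (0:ℂ) ρ, y + t • v ∈ ball x (2 * r) := by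
    intro y hy t ht
    have h1 := hρv t ht
    rw [mem_ball_iff_norm] at *
    calc ‖y + t • v - x‖ = ‖(y - x) + t • v‖ := by congr 1; abel
      _ ≤ ‖y - x‖ + ‖t • v‖ := norm_add_le _ _
      _ < 2 * r := by linarith
  have h23 : ball x (2 * r) ⊆ V := (ball_subset_ball (by linarith)).trans hs
  -- the Cauchy formula
  have hform : ∀ y ∈ ball x r, fderiv ℂ g y v =
      (2 * Real.pi * Complex.I : ℂ)⁻¹ • ∮ t in C(0, ρ), ((t - 0) ^ 2)⁻¹ • g (y + t • v) := by
    intro y hy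
    have hU : IsOpen {t : ℂ | y + t • v ∈ V} := hV.preimage (by fun_prop)
    have hyV : y ∈ V := hs (ball_subset_ball (by linarith) hy)
    have hdiff : DifferentiableOn ℂ (fun t : ℂ => g (y + t • v)) {t : ℂ | y + t • v ∈ V} :=
      hd.comp (by fun_prop) (fun t ht => ht)
    rw [Complex.two_pi_I_inv_smul_circleIntegral_sub_sq_inv_smul_of_differentiable hU
      (fun t ht => h23 (hmem y hy t ht)) hdiff (mem_ball_self hρ0)]
    have h1 : HasDerivAt (fun t : ℂ => y + t • v) v 0 := by
      simpa using ((hasDerivAt_id (0:ℂ)).smul_const v).const_add y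
    have h2 : HasFDerivAt g (fderiv ℂ g y) (y + (0:ℂ) • v) := by
      simpa using (hd.differentiableAt (hV.mem_nhds hyV)).hasFDerivAt
    exact (h2.comp_hasDerivAt 0 h1).deriv.symm
  have hev : (fun y => fderiv ℂ g y v) =ᶠ[𝓝 x] fun y =>
      (2 * Real.pi * Complex.I : ℂ)⁻¹ • ∮ t in C(0, ρ), ((t - 0) ^ 2)⁻¹ • g (y + t • v) := by
    filter_upwards [ball_mem_nhds x hr] with y hy using hform y hy
  refine DifferentiableAt.congr_of_eventuallyEq ?_ hev
  apply DifferentiableAt.const_smul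
  unfold circleIntegral
  have hcm : ∀ θ : ℝ, circleMap 0 ρ θ ∈ closedBall (0:ℂ) ρ := fun θ =>
    circleMap_mem_closedBall 0 hρ0.le θ
  have hsc : Continuous fun θ : ℝ => ((circleMap 0 ρ θ - 0) ^ 2)⁻¹ := by
    apply Continuous.inv₀ (by fun_prop)
    intro θ
    simp [circleMap_ne_center hρ0.ne']
  have hdc : Continuous fun θ : ℝ => deriv (circleMap 0 ρ) θ := by
    simp only [deriv_circleMap]
    fun_prop
  have hcont : ∀ y ∈ ball x r, Continuous fun θ : ℝ => g (y + circleMap 0 ρ θ • v) := by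
    intro y hy
    apply (hd.continuousOn).comp_continuous (by fun_prop)
    intro θ
    exact h23 (hmem y hy _ (hcm θ))
  set F' : E → ℝ → (E →L[ℂ] F) := fun y θ =>
    deriv (circleMap 0 ρ) θ • ((circleMap 0 ρ θ - 0) ^ 2)⁻¹ • fderiv ℂ g (y + circleMap 0 ρ θ • v)
    with hF'
  have hxr : x ∈ ball x r := mem_ball_self hr
  refine (intervalIntegral.hasFDerivAt_integral_of_dominated_of_fderiv_le (𝕜 := ℂ)
    (F' := F') (bound := fun θ => ‖deriv (circleMap 0 ρ) θ‖ * (‖((circleMap 0 ρ θ - 0) ^ 2)⁻¹‖ *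
      (C / r))) (ball_mem_nhds x hr) ?_ ?_ ?_ ?_ ?_ ?_).differentiableAt
  · filter_upwards [ball_mem_nhds x hr] with y hy
    exact (hdc.smul (hsc.smul (hcont y hy))).aestronglyMeasurable
  · exact (hdc.smul (hsc.smul (hcont x hxr))).intervalIntegrable _ _
  · have : Continuous fun θ : ℝ => fderiv ℂ g (x + circleMap 0 ρ θ • v) := by
      apply (fderiv_continuousOn hV hd).comp_continuous (by fun_prop)
      intro θ
      exact h23 (hmem x hxr _ (hcm θ))
    exact (hdc.smul (hsc.smul this)).aestronglyMeasurable
  · refine Eventually.of_forall fun θ _ y hy => ?_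
    rw [hF']
    simp only [norm_smul]
    have := hmem y hy _ (hcm θ)
    have hsub : ball (y + circleMap 0 ρ θ • v) r ⊆ ball x (3 * r) := by
      intro z hz
      rw [mem_ball] at *
      linarith [dist_triangle z (y + circleMap 0 ρ θ • v) x]
    gcongr
    exact cauchy_fderiv hr hC (hd.mono (hsub.trans hs)) (fun z hz => hb z (hsub hz))
  · exact (hdc.norm.mul (hsc.norm.mul continuous_const)).intervalIntegrable _ _
  · refine Eventually.of_forall fun θ _ y hy => ?_
    apply HasFDerivAt.const_smul
    apply HasFDerivAt.const_smul
    have h2 : HasFDerivAt g (fderiv ℂ g (y + circleMap 0 ρ θ • v)) (y + circleMap 0 ρ θ • v) :=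
      (hd.differentiableAt (hV.mem_nhds (h23 (hmem y hy _ (hcm θ))))).hasFDerivAt
    have h3 := h2.comp y ((hasFDerivAt_id (𝕜 := ℂ) y).add_const (circleMap 0 ρ θ • v))
    simpa [Function.comp_def] using h3

/-- Goursat in Banach spaces: the derivative is again complex differentiable. -/
theorem fderiv_differentiableOn [CompleteSpace F] {g : E → F} {V : Set E} (hV : IsOpen V)
    (hd : DifferentiableOn ℂ g V) : DifferentiableOn ℂ (fderiv ℂ g) V := by
  intro x hx
  apply DifferentiableAt.differentiableWithinAt
  have hq : ∀ v, DifferentiableOn ℂ (fun y => fderiv ℂ g y v) V := fun v y hy =>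
    (fderiv_apply_differentiableAt hV hd v hy).differentiableWithinAt
  have hc := fderiv_continuousOn hV hd
  have h1 : ∀ᶠ z in 𝓝 x, ‖fderiv ℂ g z‖ < ‖fderiv ℂ g x‖ + 1 :=
    (hc.continuousAt (hV.mem_nhds hx)).norm.eventually_lt_const (by linarith)
  obtain ⟨r, hr, h⟩ := Metric.mem_nhds_iff.1 (inter_mem h1 (hV.mem_nhds hx))
  set L := ‖fderiv ℂ g x‖ + 1 with hL
  have hL0 : 0 ≤ L := by positivity
  have hr3 : 3 * (r / 3) = r := by ring
  have hb : ∀ v, ∀ z ∈ ball x (3 * (r / 3)), ‖fderiv ℂ g z v‖ ≤ L * ‖v‖ := by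
    intro v z hz
    rw [hr3] at hz
    exact (ContinuousLinearMap.le_opNorm _ _).trans (by gcongr; exact (h hz).1.le)
  have hqd : ∀ v, DifferentiableOn ℂ (fun y => fderiv ℂ g y v) (ball x (3 * (r / 3))) := by
    intro v
    rw [hr3]
    exact (hq v).mono (fun z hz => (h hz).2)
  have hqx : ∀ v, DifferentiableAt ℂ (fun y => fderiv ℂ g y v) x := fun v =>
    fderiv_apply_differentiableAt hV hd v hx
  let B : E →L[ℂ] E →L[ℂ] F := LinearMap.mkContinuous
    { toFun := fun v => fderiv ℂ (fun y => fderiv ℂ g y v) x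
      map_add' := by
        intro v w
        simp only [map_add]
        exact fderiv_fun_add (hqx v) (hqx w)
      map_smul' := by
        intro a v
        simp only [map_smul, RingHom.id_apply]
        exact fderiv_fun_const_smul (hqx v) a } (L / r) (by
      intro v
      have := cauchy_fderiv (C := L * ‖v‖) hr (by positivity) (hr3 ▸ hqd v) (hr3 ▸ hb v)
      calc _ ≤ _ := this
        _ = _ := by ring)
  have hB : ∀ v, B v = fderiv ℂ (fun y => fderiv ℂ g y v) x := fun v => rfl
  refine HasFDerivAt.differentiableAt (f' := B.flip) ?_
  rw [hasFDerivAt_iff_isLittleO]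
  have hO : (fun y => fderiv ℂ g y - fderiv ℂ g x - B.flip (y - x)) =O[𝓝 x]
      fun y => ‖y - x‖ ^ 2 := by
    refine Asymptotics.IsBigO.of_bound (L / (r / 3) / (r / 3)) ?_
    filter_upwards [ball_mem_nhds x (show 0 < r / 3 by positivity)] with y hy
    refine ContinuousLinearMap.opNorm_le_bound _ (by positivity) fun v => ?_
    have := cauchy_taylor (C := L * ‖v‖) (r := r / 3) (by positivity) (by positivity) (hqd v)
      (hb v) hy
    rw [← hB] at this
    simp only [_root_.sub_apply, ContinuousLinearMap.flip_apply]
    refine this.trans (le_of_eq ?_)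
    rw [Real.norm_of_nonneg (by positivity)]
    ring
  refine hO.trans_isLittleO ?_
  rw [Asymptotics.isLittleO_iff]
  intro c hc
  filter_upwards [ball_mem_nhds x hc] with y hy
  rw [mem_ball_iff_norm] at hy
  rw [Real.norm_of_nonneg (by positivity), pow_two]
  gcongr

end Strob


namespace Strob

open Set Metric Filter Topology

universe u


variable {E F G : Type u} [NormedAddCommGroup E] [NormedSpace ℂ E]
  [NormedAddCommGroup F] [NormedSpace ℂ F] [NormedAddCommGroup G] [NormedSpace ℂ G]

/-- Continuous jointly, complex differentiable in the space variable. -/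
structure Base {T : Type*} [TopologicalSpace T] (I : Set T) (V : Set E) (g : T → E → F) :
    Prop where
  cont : ContinuousOn (fun x : T × E => g x.1 x.2) (I ×ˢ V)
  diff : ∀ t ∈ I, DifferentiableOn ℂ (g t) V

/-- The complex disc where the auxiliary variable `s` lives. -/
abbrev Dk : Set ℂ := ball 0 (1/2)

theorem zero_mem_Dk : (0:ℂ) ∈ Dk := by simp [Dk]

/-- Level-zero relation. -/
def J0 (V : Set E) (g : ℝ → E → F) (G : ℝ → ℂ → E → F) : Prop :=
  Base univ V g ∧ (∀ θ, Base Dk V (G θ)) ∧ ∀ θ, ∀ u ∈ V, G θ 0 u = g θ u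

/-- `G θ` is holomorphic in `(s,u)` and has the same `p`-jet in `s` at `0` as `g` has in `θ`. -/
def Jt (V : Set E) : ℕ → (ℝ → E → F) → (ℝ → ℂ → E → F) → Prop
  | 0, g, G => J0 V g G
  | p+1, g, G => J0 V g G ∧ ∃ g' G',
      (∀ θ, ∀ u ∈ V, HasDerivAt (fun τ => g τ u) (g' θ u) θ) ∧
      (∀ θ, ∀ s ∈ Dk, ∀ u ∈ V, HasDerivAt (fun z => G θ z u) (G' θ s u) s) ∧ Jt V p g' G'

theorem Jt.zero {V : Set E} {p : ℕ} {g : ℝ → E → F} {G : ℝ → ℂ → E → F} (h : Jt V p g G) :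
    J0 V g G := by
  cases p with
  | zero => exact h
  | succ p => exact h.1

theorem Jt.of_succ {V : Set E} {p : ℕ} : ∀ {g : ℝ → E → F} {G : ℝ → ℂ → E → F},
    Jt V (p+1) g G → Jt V p g G := by
  induction p with
  | zero => intro g G h; exact h.1
  | succ p ih =>
    intro g G h
    obtain ⟨h0, g', G', h1, h2, h3⟩ := h
    exact ⟨h0, g', G', h1, h2, ih h3⟩

theorem Base.mono {T : Type*} [TopologicalSpace T] {I : Set T} {V V' : Set E} {g : T → E → F}
    (h : Base I V g) (hV : V' ⊆ V) : Base I V' g :=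
  ⟨h.cont.mono (prod_mono_right hV), fun t ht => (h.diff t ht).mono hV⟩

theorem J0.mono {V V' : Set E} {g : ℝ → E → F} {G : ℝ → ℂ → E → F}
    (h : J0 V g G) (hV : V' ⊆ V) : J0 V' g G :=
  ⟨h.1.mono hV, fun θ => (h.2.1 θ).mono hV, fun θ u hu => h.2.2 θ u (hV hu)⟩

theorem Jt.mono {V V' : Set E} {p : ℕ} (hV : V' ⊆ V) :
    ∀ {g : ℝ → E → F} {G : ℝ → ℂ → E → F}, Jt V p g G → Jt V' p g G := by
  induction p with
  | zero => intro g G h; exact J0.mono h hV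
  | succ p ih =>
    intro g G h
    obtain ⟨h0, g', G', h1, h2, h3⟩ := h
    exact ⟨J0.mono h0 hV, g', G', fun θ u hu => h1 θ u (hV hu), fun θ s hs u hu =>
      h2 θ s hs u (hV hu), ih h3⟩

theorem J0.add {V : Set E} {g₁ g₂ : ℝ → E → F} {G₁ G₂ : ℝ → ℂ → E → F}
    (h₁ : J0 V g₁ G₁) (h₂ : J0 V g₂ G₂) :
    J0 V (fun θ u => g₁ θ u + g₂ θ u) (fun θ s u => G₁ θ s u + G₂ θ s u) :=
  ⟨⟨h₁.1.cont.add h₂.1.cont, fun t ht => (h₁.1.diff t ht).add (h₂.1.diff t ht)⟩,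
   fun θ => ⟨(h₁.2.1 θ).cont.add (h₂.2.1 θ).cont, fun t ht =>
    ((h₁.2.1 θ).diff t ht).add ((h₂.2.1 θ).diff t ht)⟩,
   fun θ u hu => by simp [h₁.2.2 θ u hu, h₂.2.2 θ u hu]⟩

theorem J0.sub {V : Set E} {g₁ g₂ : ℝ → E → F} {G₁ G₂ : ℝ → ℂ → E → F}
    (h₁ : J0 V g₁ G₁) (h₂ : J0 V g₂ G₂) :
    J0 V (fun θ u => g₁ θ u - g₂ θ u) (fun θ s u => G₁ θ s u - G₂ θ s u) :=
  ⟨⟨h₁.1.cont.sub h₂.1.cont, fun t ht => (h₁.1.diff t ht).sub (h₂.1.diff t ht)⟩,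
   fun θ => ⟨(h₁.2.1 θ).cont.sub (h₂.2.1 θ).cont, fun t ht =>
    ((h₁.2.1 θ).diff t ht).sub ((h₂.2.1 θ).diff t ht)⟩,
   fun θ u hu => by simp [h₁.2.2 θ u hu, h₂.2.2 θ u hu]⟩

theorem Jt.add {V : Set E} {p : ℕ} : ∀ {g₁ g₂ : ℝ → E → F} {G₁ G₂ : ℝ → ℂ → E → F},
    Jt V p g₁ G₁ → Jt V p g₂ G₂ →
    Jt V p (fun θ u => g₁ θ u + g₂ θ u) (fun θ s u => G₁ θ s u + G₂ θ s u) := by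
  induction p with
  | zero => intro g₁ g₂ G₁ G₂ h₁ h₂; exact J0.add h₁ h₂
  | succ p ih =>
    rintro g₁ g₂ G₁ G₂ ⟨h0, g', G', h1, h2, h3⟩ ⟨k0, k', K', k1, k2, k3⟩
    exact ⟨h0.add k0, _, _, fun θ u hu => (h1 θ u hu).add (k1 θ u hu),
      fun θ s hs u hu => (h2 θ s hs u hu).add (k2 θ s hs u hu), ih h3 k3⟩

theorem Jt.sub {V : Set E} {p : ℕ} : ∀ {g₁ g₂ : ℝ → E → F} {G₁ G₂ : ℝ → ℂ → E → F},
    Jt V p g₁ G₁ → Jt V p g₂ G₂ →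
    Jt V p (fun θ u => g₁ θ u - g₂ θ u) (fun θ s u => G₁ θ s u - G₂ θ s u) := by
  induction p with
  | zero => intro g₁ g₂ G₁ G₂ h₁ h₂; exact J0.sub h₁ h₂
  | succ p ih =>
    rintro g₁ g₂ G₁ G₂ ⟨h0, g', G', h1, h2, h3⟩ ⟨k0, k', K', k1, k2, k3⟩
    exact ⟨h0.sub k0, _, _, fun θ u hu => (h1 θ u hu).sub (k1 θ u hu),
      fun θ s hs u hu => (h2 θ s hs u hu).sub (k2 θ s hs u hu), ih h3 k3⟩

theorem Base.const {T : Type*} [TopologicalSpace T] {I : Set T} {V : Set E} {g : E → F}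
    (h : DifferentiableOn ℂ g V) : Base I V (fun _ : T => g) :=
  ⟨h.continuousOn.comp continuousOn_snd (fun _ hx => hx.2), fun _ _ => h⟩

theorem Jt.const {V : Set E} {p : ℕ} : ∀ {g : E → F}, DifferentiableOn ℂ g V →
    Jt V p (fun _ => g) (fun _ _ => g) := by
  induction p with
  | zero => intro g h; exact ⟨Base.const h, fun _ => Base.const h, fun _ _ _ => rfl⟩
  | succ p ih =>
    intro g h
    refine ⟨⟨Base.const h, fun _ => Base.const h, fun _ _ _ => rfl⟩, fun _ _ => 0, fun _ _ _ => 0,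
      fun θ u hu => hasDerivAt_const _ _, fun θ s hs u hu => hasDerivAt_const _ _, ?_⟩
    exact ih (g := fun _ => 0) (differentiableOn_const _)

theorem J0.clm_apply {V : Set E} {a : ℝ → E → (F →L[ℂ] G)} {A : ℝ → ℂ → E → (F →L[ℂ] G)}
    {b : ℝ → E → F} {B : ℝ → ℂ → E → F} (h₁ : J0 V a A) (h₂ : J0 V b B) :
    J0 V (fun θ u => a θ u (b θ u)) (fun θ s u => A θ s u (B θ s u)) :=
  ⟨⟨h₁.1.cont.clm_apply h₂.1.cont, fun t ht => (h₁.1.diff t ht).clm_apply (h₂.1.diff t ht)⟩,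
   fun θ => ⟨(h₁.2.1 θ).cont.clm_apply (h₂.2.1 θ).cont, fun t ht =>
    ((h₁.2.1 θ).diff t ht).clm_apply ((h₂.2.1 θ).diff t ht)⟩,
   fun θ u hu => by simp [h₁.2.2 θ u hu, h₂.2.2 θ u hu]⟩

theorem hasDerivAt_clm_apply_real {a : ℝ → (F →L[ℂ] G)} {a' : F →L[ℂ] G} {b : ℝ → F} {b' : F}
    {t : ℝ} (ha : HasDerivAt a a' t) (hb : HasDerivAt b b' t) :
    HasDerivAt (fun t => a t (b t)) (a' (b t) + a t b') t := by
  have hbil : IsBoundedBilinearMap ℝ (fun x : (F →L[ℂ] G) × F => x.1 x.2) :=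
    { add_left := by intros; simp
      smul_left := by intros; rfl
      add_right := by intros; simp
      smul_right := by
        intro c x y
        exact map_smul x (c : ℂ) y
      bound := ⟨1, one_pos, fun x y => by simpa using x.le_opNorm y⟩ }
  have := (hbil.hasFDerivAt (a t, b t)).comp_hasDerivAt t (ha.prodMk hb)
  have e : a' (b t) + a t b' = hbil.deriv (a t, b t) (a', b') := by
    exact add_comm _ _
  rw [e]
  exact this

theorem hasDerivAt_clm_apply_complex {a : ℂ → (F →L[ℂ] G)} {a' : F →L[ℂ] G} {b : ℂ → F} {b' : F}
    {t : ℂ} (ha : HasDerivAt a a' t) (hb : HasDerivAt b b' t) :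
    HasDerivAt (fun t => a t (b t)) (a' (b t) + a t b') t := ha.clm_apply hb

theorem Jt.clm_apply {V : Set E} {p : ℕ} :
    ∀ {a : ℝ → E → (F →L[ℂ] G)} {A : ℝ → ℂ → E → (F →L[ℂ] G)}
    {b : ℝ → E → F} {B : ℝ → ℂ → E → F}, Jt V p a A → Jt V p b B →
    Jt V p (fun θ u => a θ u (b θ u)) (fun θ s u => A θ s u (B θ s u)) := by
  induction p with
  | zero => intro a A b B h₁ h₂; exact J0.clm_apply h₁ h₂
  | succ p ih =>
    intro a A b B ha hb
    have ha' := ha.of_succ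
    have hb' := hb.of_succ
    obtain ⟨h0, g', G', h1, h2, h3⟩ := ha
    obtain ⟨k0, k', K', k1, k2, k3⟩ := hb
    exact ⟨h0.clm_apply k0, _, _,
      fun θ u hu => hasDerivAt_clm_apply_real (h1 θ u hu) (k1 θ u hu),
      fun θ s hs u hu => hasDerivAt_clm_apply_complex (h2 θ s hs u hu) (k2 θ s hs u hu),
      (ih h3 hb').add (ih ha' k3)⟩

theorem Base.exists_bound {T : Type*} [PseudoMetricSpace T] {I : Set T} {V : Set E} {g : T → E → F}
    (hI : IsOpen I) (hV : IsOpen V) (h : Base I V g) {t : T} {x : E} (ht : t ∈ I) (hx : x ∈ V) :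
    ∃ r > 0, ∃ C ≥ 0, ball t r ⊆ I ∧ ball x r ⊆ V ∧ ∀ τ ∈ ball t r, ∀ z ∈ ball x r, ‖g τ z‖ ≤ C := by
  have hc : ContinuousAt (fun x : T × E => g x.1 x.2) (t, x) :=
    h.cont.continuousAt ((hI.prod hV).mem_nhds ⟨ht, hx⟩)
  have h1 : ∀ᶠ z in 𝓝 (t, x), ‖g z.1 z.2‖ < ‖g t x‖ + 1 := hc.norm.eventually_lt_const (by simp)
  obtain ⟨r, hr, h⟩ := Metric.mem_nhds_iff.1 (inter_mem h1 ((hI.prod hV).mem_nhds ⟨ht, hx⟩))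
  rw [← ball_prod_same] at h
  refine ⟨r, hr, ‖g t x‖ + 1, by positivity, ?_, ?_, ?_⟩
  · intro τ hτ
    exact (h (mk_mem_prod hτ (mem_ball_self hr))).2.1
  · intro z hz
    exact (h (mk_mem_prod (mem_ball_self hr) hz)).2.2
  · intro τ hτ z hz
    exact (h (mk_mem_prod hτ hz)).1.le

theorem mv1 {𝕜 : Type*} [RCLike 𝕜] {F : Type*} [NormedAddCommGroup F] [NormedSpace 𝕜 F]
    {g g' : 𝕜 → F} {t₀ t : 𝕜} {r C : ℝ} (h : ∀ t ∈ ball t₀ r, HasDerivAt g (g' t) t)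
    (hb : ∀ t ∈ ball t₀ r, ‖g' t‖ ≤ C) (ht : t ∈ ball t₀ r) :
    ‖g t - g t₀‖ ≤ C * ‖t - t₀‖ := by
  have hr : 0 < r := pos_of_mem_ball ht
  exact (convex_ball t₀ r).norm_image_sub_le_of_norm_hasDerivWithin_le
    (fun x hx => (h x hx).hasDerivWithinAt) hb (mem_ball_self hr) ht

theorem mv2 {𝕜 : Type*} [RCLike 𝕜] {F : Type*} [NormedAddCommGroup F] [NormedSpace 𝕜 F]
    {g g' g'' : 𝕜 → F} {t₀ t : 𝕜} {r C : ℝ} (hC : 0 ≤ C)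
    (h : ∀ t ∈ ball t₀ r, HasDerivAt g (g' t) t)
    (h' : ∀ t ∈ ball t₀ r, HasDerivAt g' (g'' t) t)
    (hb : ∀ t ∈ ball t₀ r, ‖g'' t‖ ≤ C) (ht : t ∈ ball t₀ r) :
    ‖g t - g t₀ - (t - t₀) • g' t₀‖ ≤ C * ‖t - t₀‖ * ‖t - t₀‖ := by
  have htr : ‖t - t₀‖ < r := by rwa [mem_ball_iff_norm] at ht
  have hsub : closedBall t₀ ‖t - t₀‖ ⊆ ball t₀ r := closedBall_subset_ball htr
  have := (convex_closedBall t₀ ‖t - t₀‖).norm_image_sub_le_of_norm_hasDerivWithin_le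
    (f := fun t => g t - (t - t₀) • g' t₀) (f' := fun t => g' t - g' t₀) (C := C * ‖t - t₀‖)
    (x := t₀) (y := t) ?_ ?_ (by simp) (by rw [mem_closedBall_iff_norm])
  · simp only [sub_self, zero_smul, sub_zero] at this
    convert this using 2
    abel
  · intro x hx
    have h1 : HasDerivAt (fun t => (t - t₀) • g' t₀) ((1:𝕜) • g' t₀) x :=
      ((hasDerivAt_id x).sub_const t₀).smul_const _
    rw [one_smul] at h1
    exact ((h x (hsub hx)).sub h1).hasDerivWithinAt
  · intro x hx
    refine (mv1 h' hb (hsub hx)).trans ?_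
    rw [mem_closedBall_iff_norm] at hx
    gcongr

/-- `L1`: continuity of the space derivative. -/
theorem Base.fderiv_cont [CompleteSpace F] {𝕜 : Type*} [RCLike 𝕜] [NormedSpace 𝕜 F]
    {I : Set 𝕜} {V : Set E}
    {g g' : 𝕜 → E → F} (hI : IsOpen I) (hV : IsOpen V) (h : Base I V g) (h' : Base I V g')
    (hd : ∀ t ∈ I, ∀ u ∈ V, HasDerivAt (fun τ => g τ u) (g' t u) t) :
    Base I V (fun t u => fderiv ℂ (g t) u) := by
  refine ⟨?_, fun t ht => fderiv_differentiableOn hV (h.diff t ht)⟩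
  rintro ⟨t, x⟩ ⟨ht, hx⟩
  apply ContinuousAt.continuousWithinAt
  obtain ⟨r, hr, C, hC, hsI, hsV, hb⟩ := h'.exists_bound hI hV ht hx
  have hc : ContinuousAt (fun u => fderiv ℂ (g t) u) x :=
    (fderiv_continuousOn hV (h.diff t ht)).continuousAt (hV.mem_nhds hx)
  have h1 : Tendsto (fun z : 𝕜 × E => fderiv ℂ (g t) z.2) (𝓝 (t, x)) (𝓝 (fderiv ℂ (g t) x)) :=
    hc.tendsto.comp continuousAt_snd.tendsto
  have h2 : Tendsto (fun z : 𝕜 × E => fderiv ℂ (g z.1) z.2 - fderiv ℂ (g t) z.2)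
      (𝓝 (t, x)) (𝓝 0) := by
    have h0 : Tendsto (fun z : 𝕜 × E => C * ‖z.1 - t‖ / (r / 2)) (𝓝 (t, x)) (𝓝 0) := by
      have : Continuous (fun z : 𝕜 × E => C * ‖z.1 - t‖ / (r / 2)) := by fun_prop
      simpa using this.tendsto (t, x)
    refine squeeze_zero_norm' ?_ h0
    have hn : ball t r ×ˢ ball x (r / 2) ∈ 𝓝 (t, x) :=
      prod_mem_nhds (ball_mem_nhds t hr) (ball_mem_nhds x (by positivity))
    filter_upwards [hn] with z hz
    have hzb : ball z.2 (r / 2) ⊆ ball x r := by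
      intro w hw
      have := hz.2
      rw [mem_ball] at *
      linarith [dist_triangle w z.2 x]
    have hz2 : z.2 ∈ V := hsV (hzb (mem_ball_self (by positivity)))
    have e : fderiv ℂ (g z.1) z.2 - fderiv ℂ (g t) z.2 =
        fderiv ℂ (fun u => g z.1 u - g t u) z.2 := by
      rw [fderiv_fun_sub]
      · exact (h.diff z.1 (hsI hz.1)).differentiableAt (hV.mem_nhds hz2)
      · exact (h.diff t ht).differentiableAt (hV.mem_nhds hz2)
    rw [e]
    refine cauchy_fderiv (by positivity) (by positivity) ?_ ?_
    · exact ((h.diff z.1 (hsI hz.1)).sub (h.diff t ht)).mono (hzb.trans hsV)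
    · intro w hw
      exact mv1 (fun τ hτ => hd τ (hsI hτ) w (hsV (hzb hw))) (fun τ hτ => hb τ hτ w (hzb hw)) hz.1
  have := h2.add h1
  simpa [ContinuousAt] using this

/-- `L2`, core estimate. -/
theorem Base.fderiv_taylor {𝕜 : Type*} [RCLike 𝕜] [NormedSpace 𝕜 F]
    {I : Set 𝕜} {V : Set E} (κ : 𝕜 → ℂ) (hκ : ∀ (c : 𝕜) (x : F), c • x = κ c • x)
    {g g' g'' : 𝕜 → E → F} (hI : IsOpen I) (hV : IsOpen V) (h : Base I V g) (h' : Base I V g')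
    (h'' : Base I V g'')
    (hd : ∀ t ∈ I, ∀ u ∈ V, HasDerivAt (fun τ => g τ u) (g' t u) t)
    (hd' : ∀ t ∈ I, ∀ u ∈ V, HasDerivAt (fun τ => g' τ u) (g'' t u) t)
    {t : 𝕜} {x : E} (ht : t ∈ I) (hx : x ∈ V) :
    (fun τ => fderiv ℂ (g τ) x - fderiv ℂ (g t) x - κ (τ - t) • fderiv ℂ (g' t) x)
      =o[𝓝 t] fun τ => τ - t := by
  obtain ⟨r, hr, C, hC, hsI, hsV, hb⟩ := h''.exists_bound hI hV ht hx
  have hO : (fun τ => fderiv ℂ (g τ) x - fderiv ℂ (g t) x - κ (τ - t) • fderiv ℂ (g' t) x)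
      =O[𝓝 t] fun τ => ‖τ - t‖ ^ 2 := by
    refine Asymptotics.IsBigO.of_bound (C / r) ?_
    filter_upwards [ball_mem_nhds t hr] with τ hτ
    have d1 := (h.diff τ (hsI hτ)).differentiableAt (hV.mem_nhds hx)
    have d2 := (h.diff t ht).differentiableAt (hV.mem_nhds hx)
    have d3 := (h'.diff t ht).differentiableAt (hV.mem_nhds hx)
    have e : fderiv ℂ (g τ) x - fderiv ℂ (g t) x - κ (τ - t) • fderiv ℂ (g' t) x =
        fderiv ℂ (fun u => g τ u - g t u - κ (τ - t) • g' t u) x := by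
      exact (((d1.hasFDerivAt.sub d2.hasFDerivAt).sub
        (d3.hasFDerivAt.const_smul (κ (τ - t)))).fderiv).symm
    rw [e, Real.norm_of_nonneg (by positivity)]
    have : C / r * ‖τ - t‖ ^ 2 = (C * ‖τ - t‖ * ‖τ - t‖) / r := by ring
    rw [this]
    refine cauchy_fderiv hr (by positivity) ?_ ?_
    · exact (((h.diff τ (hsI hτ)).sub (h.diff t ht)).sub ((h'.diff t ht).const_smul _)).mono hsV
    · intro w hw
      rw [← hκ]
      exact mv2 hC (fun τ hτ => hd τ (hsI hτ) w (hsV hw)) (fun τ hτ => hd' τ (hsI hτ) w (hsV hw))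
        (fun τ hτ => hb τ hτ w hw) hτ
  refine hO.trans_isLittleO ?_
  rw [Asymptotics.isLittleO_iff]
  intro c hc
  filter_upwards [ball_mem_nhds t hc] with y hy
  rw [mem_ball_iff_norm] at hy
  rw [Real.norm_of_nonneg (by positivity), pow_two]
  gcongr

theorem J0.fderiv [CompleteSpace F] {V : Set E} (hV : IsOpen V) {g g' : ℝ → E → F}
    {G G' : ℝ → ℂ → E → F} (h : J0 V g G) (h' : J0 V g' G')
    (h1 : ∀ θ, ∀ u ∈ V, HasDerivAt (fun τ => g τ u) (g' θ u) θ)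
    (h2 : ∀ θ, ∀ s ∈ Dk, ∀ u ∈ V, HasDerivAt (fun z => G θ z u) (G' θ s u) s) :
    J0 V (fun θ u => fderiv ℂ (g θ) u) (fun θ s u => fderiv ℂ (G θ s) u) := by
  refine ⟨h.1.fderiv_cont isOpen_univ hV h'.1 (fun t _ u hu => h1 t u hu),
    fun θ => (h.2.1 θ).fderiv_cont isOpen_ball hV (h'.2.1 θ) (fun s hs u hu => h2 θ s hs u hu), ?_⟩
  intro θ u hu
  apply Filter.EventuallyEq.fderiv_eq
  filter_upwards [hV.mem_nhds hu] with v hv using h.2.2 θ v hv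

theorem Jt.fderiv [CompleteSpace F] {V : Set E} (hV : IsOpen V) {p : ℕ} :
    ∀ {g : ℝ → E → F} {G : ℝ → ℂ → E → F}, Jt V (p+1) g G →
    Jt V p (fun θ u => fderiv ℂ (g θ) u) (fun θ s u => fderiv ℂ (G θ s) u) := by
  induction p with
  | zero =>
    rintro g G ⟨h0, g', G', h1, h2, h3⟩
    exact h0.fderiv hV h3 h1 h2
  | succ p ih =>
    rintro g G ⟨h0, g', G', h1, h2, h3⟩
    have h3' := h3
    obtain ⟨k0, g'', G'', k1, k2, k3⟩ := h3
    refine ⟨h0.fderiv hV k0 h1 h2, _, _, ?_, ?_, ih h3'⟩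
    · intro θ u hu
      rw [hasDerivAt_iff_isLittleO]
      exact Base.fderiv_taylor (𝕜 := ℝ) (fun c => (c : ℂ)) (fun c x => rfl) isOpen_univ hV h0.1 k0.1
        k3.zero.1 (fun t _ u hu => h1 t u hu) (fun t _ u hu => k1 t u hu) (mem_univ θ) hu
    · intro θ s hs u hu
      rw [hasDerivAt_iff_isLittleO]
      exact Base.fderiv_taylor (𝕜 := ℂ) (fun c => c) (fun c x => rfl) isOpen_ball hV (h0.2.1 θ)
        (k0.2.1 θ) (k3.zero.2.1 θ) (fun t ht u hu => h2 θ t ht u hu)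
        (fun t ht u hu => k2 θ t ht u hu) hs hu

end Strob


namespace Strob

open Set Metric Filter Topology

universe u


variable {E F G : Type u} [NormedAddCommGroup E] [NormedSpace ℂ E]
  [NormedAddCommGroup F] [NormedSpace ℂ F] [NormedAddCommGroup G] [NormedSpace ℂ G]

theorem chain_core {𝕜 : Type*} [RCLike 𝕜] [NormedSpace 𝕜 G]
    {I : Set 𝕜} {W : Set F} {f f' : 𝕜 → F → G} (hI : IsOpen I) (hW : IsOpen W)
    (h' : Base I W f') (hd : ∀ t ∈ I, ∀ u ∈ W, HasDerivAt (fun τ => f τ u) (f' t u) t)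
    {φ : 𝕜 → F} {t₀ : 𝕜} (ht : t₀ ∈ I) (hφ : φ t₀ ∈ W) (hc : ContinuousAt φ t₀) {v : G}
    (h2 : HasDerivAt (fun t => f t₀ (φ t)) v t₀) :
    HasDerivAt (fun t => f t (φ t)) (f' t₀ (φ t₀) + v) t₀ := by
  have h1 : HasDerivAt (fun t => f t (φ t) - f t₀ (φ t)) (f' t₀ (φ t₀)) t₀ := by
    rw [hasDerivAt_iff_isLittleO, Asymptotics.isLittleO_iff]
    intro ε hε
    have hcont : ContinuousAt (fun x : 𝕜 × F => f' x.1 x.2) (t₀, φ t₀) :=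
      h'.cont.continuousAt ((hI.prod hW).mem_nhds ⟨ht, hφ⟩)
    have e1 : ∀ᶠ x in 𝓝 (t₀, φ t₀), ‖f' x.1 x.2 - f' t₀ (φ t₀)‖ < ε ∧ x ∈ I ×ˢ W := by
      refine Filter.Eventually.and ?_ ((hI.prod hW).mem_nhds ⟨ht, hφ⟩)
      have := Metric.tendsto_nhds.1 hcont ε hε
      simpa [dist_eq_norm] using this
    obtain ⟨r, hr, hb⟩ := Metric.mem_nhds_iff.1 e1
    rw [← ball_prod_same] at hb
    filter_upwards [ball_mem_nhds t₀ hr, hc.preimage_mem_nhds (ball_mem_nhds (φ t₀) hr)] with t h3 h4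
    have := mv1 (g := fun τ => f τ (φ t) - (τ - t₀) • f' t₀ (φ t₀))
      (g' := fun τ => f' τ (φ t) - f' t₀ (φ t₀)) (t₀ := t₀) (t := t) (r := r) (C := ε) ?_ ?_ h3
    · convert this using 2
      simp only [sub_self, zero_smul, sub_zero]
      abel
    · intro τ hτ
      have hk : HasDerivAt (fun t => (t - t₀) • f' t₀ (φ t₀)) ((1:𝕜) • f' t₀ (φ t₀)) τ :=
        ((hasDerivAt_id τ).sub_const t₀).smul_const _
      rw [one_smul] at hk
      have hm := (hb (mk_mem_prod hτ h4)).2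
      exact (hd τ hm.1 _ hm.2).sub hk
    · intro τ hτ
      exact (hb (mk_mem_prod hτ h4)).1.le
  have := h1.fun_add h2
  simpa using this

theorem Base.comp {T : Type*} [TopologicalSpace T] {I : Set T} {V : Set E} {W : Set F}
    {f : T → F → G} {φ : T → E → F} (hf : Base I W f) (hφ : Base I V φ)
    (hm : ∀ t ∈ I, ∀ u ∈ V, φ t u ∈ W) : Base I V (fun t u => f t (φ t u)) :=
  ⟨hf.cont.comp (continuousOn_fst.prodMk hφ.cont) (fun _ hx => ⟨hx.1, hm _ hx.1 _ hx.2⟩),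
    fun t ht => (hf.diff t ht).comp (hφ.diff t ht) (fun u hu => hm t ht u hu)⟩

theorem J0.comp {V : Set E} {W : Set F} {f : ℝ → F → G} {fs : ℝ → ℂ → F → G}
    {φ : ℝ → E → F} {P : ℝ → ℂ → E → F} (hf : J0 W f fs) (hφ : J0 V φ P)
    (hm : ∀ θ, ∀ u ∈ V, φ θ u ∈ W) (hm' : ∀ θ, ∀ s ∈ Dk, ∀ u ∈ V, P θ s u ∈ W) :
    J0 V (fun θ u => f θ (φ θ u)) (fun θ s u => fs θ s (P θ s u)) :=
  ⟨hf.1.comp hφ.1 (fun t _ => hm t), fun θ => (hf.2.1 θ).comp (hφ.2.1 θ) (hm' θ),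
   fun θ u hu => by simp only [hφ.2.2 θ u hu]; exact hf.2.2 _ _ (hm θ u hu)⟩

theorem Jt.comp {V : Set E} {W : Set F} (hW : IsOpen W) {p : ℕ}
    {φ : ℝ → E → F} {P : ℝ → ℂ → E → F} (hφ : Jt V p φ P)
    (hm : ∀ θ, ∀ u ∈ V, φ θ u ∈ W) (hm' : ∀ θ, ∀ s ∈ Dk, ∀ u ∈ V, P θ s u ∈ W) :
    ∀ {G : Type u} [NormedAddCommGroup G] [NormedSpace ℂ G] [CompleteSpace G]
    {f : ℝ → F → G} {fs : ℝ → ℂ → F → G}, Jt W p f fs →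
    Jt V p (fun θ u => f θ (φ θ u)) (fun θ s u => fs θ s (P θ s u)) := by
  induction p with
  | zero => intro G _ _ _ f fs hf; exact J0.comp hf hφ hm hm'
  | succ p ih =>
    intro G _ _ _ f fs hf
    have hfd := hf.fderiv hW
    obtain ⟨h0, f', fs', h1, h2, h3⟩ := hf
    have ih' := @ih (hφ.of_succ)
    obtain ⟨k0, φ', P', k1, k2, k3⟩ := hφ
    refine ⟨h0.comp k0 hm hm', _, _, ?_, ?_, (ih' h3).add ((ih' hfd).clm_apply k3)⟩
    · intro θ u hu
      refine chain_core isOpen_univ hW h3.zero.1 (fun t _ u hu => h1 t u hu)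
        (φ := fun t => φ t u) (mem_univ θ)
        (hm θ u hu) (k1 θ u hu).continuousAt ?_
      have hd := ((h0.1.diff θ (mem_univ θ)).differentiableAt
        (hW.mem_nhds (hm θ u hu))).hasFDerivAt
      exact (hd.restrictScalars ℝ).comp_hasDerivAt θ (k1 θ u hu)
    · intro θ s hs u hu
      refine chain_core isOpen_ball hW (h3.zero.2.1 θ) (fun t ht u hu => h2 θ t ht u hu)
        (φ := fun t => P θ t u) hs
        (hm' θ s hs u hu) (k2 θ s hs u hu).continuousAt ?_
      have hd := (((h0.2.1 θ).diff s hs).differentiableAt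
        (hW.mem_nhds (hm' θ s hs u hu))).hasFDerivAt
      exact hd.comp_hasDerivAt s (k2 θ s hs u hu)

theorem Jt.contDiff {V : Set E} {u : E} (hu : u ∈ V) {p : ℕ} :
    ∀ {g : ℝ → E → F} {G : ℝ → ℂ → E → F}, Jt V p g G → ContDiff ℝ p (fun θ => g θ u) := by
  induction p with
  | zero =>
    intro g G h
    rw [Nat.cast_zero, contDiff_zero, ← continuousOn_univ]
    exact h.1.cont.comp (by fun_prop : ContinuousOn (fun t : ℝ => (t, u)) univ)
      (fun x hx => ⟨hx, hu⟩)
  | succ p ih =>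
    rintro g G ⟨h0, g', G', h1, h2, h3⟩
    have e : deriv (fun θ => g θ u) = fun θ => g' θ u := funext fun θ => (h1 θ u hu).deriv
    push_cast
    rw [contDiff_succ_iff_deriv, e]
    exact ⟨fun θ => (h1 θ u hu).differentiableAt, by simp, ih h3⟩

theorem Jt.iteratedDeriv_eq {V : Set E} {u : E} (hu : u ∈ V) {p : ℕ} :
    ∀ {g : ℝ → E → F} {G : ℝ → ℂ → E → F}, Jt V p g G → ∀ ν ≤ p, ∀ θ,
    iteratedDeriv ν (fun θ => g θ u) θ = iteratedDeriv ν (fun s => G θ s u) 0 := by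
  induction p with
  | zero =>
    intro g G h ν hν θ
    obtain rfl : ν = 0 := by omega
    simp [h.2.2 θ u hu]
  | succ p ih =>
    rintro g G ⟨h0, g', G', h1, h2, h3⟩ ν hν θ
    cases ν with
    | zero => simp [h0.2.2 θ u hu]
    | succ ν =>
      have e : deriv (fun θ => g θ u) = fun θ => g' θ u := funext fun θ => (h1 θ u hu).deriv
      rw [iteratedDeriv_succ', iteratedDeriv_succ', e, ih h3 ν (by omega)]
      symm
      apply Filter.EventuallyEq.iteratedDeriv_eq
      filter_upwards [isOpen_ball.mem_nhds zero_mem_Dk] with s hs using (h2 θ s hs u hu).deriv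

theorem Jt.bound [CompleteSpace F] {V : Set E} {u : E} (hu : u ∈ V) {p : ℕ}
    {g : ℝ → E → F} {G : ℝ → ℂ → E → F} (h : Jt V (p+1) g G) {C : ℝ} (θ : ℝ)
    (hC : ∀ s ∈ Dk, ‖G θ s u‖ ≤ C) (ν : ℕ) (hν : ν ≤ p + 1) :
    ‖iteratedDeriv ν (fun θ => g θ u) θ‖ ≤ ν.factorial * 2 ^ ν * C := by
  rw [h.iteratedDeriv_eq hu ν hν]
  obtain ⟨h0, g', G', h1, h2, h3⟩ := h
  have key : ∀ ρ ∈ Ioo (0:ℝ) (1/2),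
      ‖iteratedDeriv ν (fun s => G θ s u) 0‖ ≤ ν.factorial * C / ρ ^ ν := by
    intro ρ hρ
    refine Complex.norm_iteratedDeriv_le_of_forall_mem_sphere_norm_le ν hρ.1 ?_ ?_
    · have hs : closedBall (0:ℂ) ρ ⊆ Dk := closedBall_subset_ball hρ.2
      apply DifferentiableOn.diffContOnCl
      rw [closure_ball _ hρ.1.ne']
      exact fun s hs' => (h2 θ s (hs hs') u hu).differentiableAt.differentiableWithinAt
    · intro s hs
      refine hC s ?_
      rw [mem_sphere] at hs
      rw [mem_ball, hs]; exact hρ.2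
  have hl : Tendsto (fun ρ : ℝ => ν.factorial * C / ρ ^ ν) (𝓝[<] (1/2)) (𝓝 (ν.factorial * C / (1/2) ^ ν)) := by
    apply ContinuousAt.continuousWithinAt (f := fun ρ : ℝ => ν.factorial * C / ρ ^ ν)
    exact ContinuousAt.div (by fun_prop) (by fun_prop) (by positivity)
  have := ge_of_tendsto hl (by
    filter_upwards [Ioo_mem_nhdsLT (show (0:ℝ) < 1/2 by norm_num)] with ρ hρ using key ρ hρ)
  refine this.trans (le_of_eq ?_)
  rw [one_div, inv_pow, div_inv_eq_mul]; ring

end Strob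


namespace Strob

open Set Metric Filter Topology

universe u


variable {E F G : Type u} [NormedAddCommGroup E] [NormedSpace ℂ E]
  [NormedAddCommGroup F] [NormedSpace ℂ F] [NormedAddCommGroup G] [NormedSpace ℂ G]

theorem Base.compact_bound {T : Type*} [TopologicalSpace T] {k : Set T} {V : Set E} {q : T → E → F}
    (hk : IsCompact k) (hV : IsOpen V) (h : Base k V q) {x : E} (hx : x ∈ V) :
    ∃ r > 0, ∃ C ≥ 0, ball x r ⊆ V ∧ ∀ τ ∈ k, ∀ z ∈ ball x r, ‖q τ z‖ ≤ C := by
  have hc : ContinuousOn (fun τ => q τ x) k :=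
    h.cont.comp (by fun_prop : ContinuousOn (fun t : T => (t, x)) k) (fun t ht => ⟨ht, hx⟩)
  obtain ⟨C, hC⟩ := hk.exists_bound_of_continuousOn hc
  have key : ∀ᶠ z in 𝓝 x, ∀ τ ∈ k, (τ ∈ k → z ∈ V → ‖q τ z‖ < |C| + 1) := by
    refine hk.eventually_forall_of_forall_eventually
      (P := fun z τ => τ ∈ k → z ∈ V → ‖q τ z‖ < |C| + 1) ?_
    intro τ hτ
    have h1 := (h.cont (τ, x) ⟨hτ, hx⟩).norm
    have h2 : ∀ᶠ y in 𝓝[k ×ˢ V] (τ, x), ‖q y.1 y.2‖ < |C| + 1 := by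
      refine h1.eventually_lt_const ?_
      have := hC τ hτ
      have := le_abs_self C
      simp only
      linarith
    rw [eventually_nhdsWithin_iff] at h2
    have h3 : Tendsto (fun z : E × T => (z.2, z.1)) (𝓝 (x, τ)) (𝓝 (τ, x)) :=
      (by fun_prop : Continuous (fun z : E × T => (z.2, z.1))).tendsto (x, τ)
    filter_upwards [h3.eventually h2] with z hz h4 h5
    exact hz ⟨h4, h5⟩
  obtain ⟨r, hr, hb⟩ := Metric.mem_nhds_iff.1 (key.and (hV.mem_nhds hx))
  refine ⟨r, hr, |C| + 1, by positivity, fun z hz => (hb hz).2, fun τ hτ z hz => ?_⟩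
  exact ((hb hz).1 τ hτ hτ (hb hz).2).le

theorem Base.slice {T : Type*} [TopologicalSpace T] {k : Set T} {V : Set E} {q : T → E → F}
    (h : Base k V q) {x : E} (hx : x ∈ V) : ContinuousOn (fun τ => q τ x) k :=
  h.cont.comp (by fun_prop : ContinuousOn (fun t : T => (t, x)) k) (fun _ ht => ⟨ht, hx⟩)

theorem Base.monoI {T : Type*} [TopologicalSpace T] {I k : Set T} {V : Set E} {q : T → E → F}
    (h : Base I V q) (hk : k ⊆ I) : Base k V q :=
  ⟨h.cont.mono (prod_mono_left hk), fun t ht => h.diff t (hk ht)⟩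

theorem Base.hasFDerivAt_integral {a b : ℝ} {V : Set E} {q : ℝ → E → F}
    (hV : IsOpen V) (h : Base (uIcc a b) V q)
    (h' : Base (uIcc a b) V (fun t u => fderiv ℂ (q t) u)) {x : E} (hx : x ∈ V) :
    HasFDerivAt (fun z => ∫ τ in a..b, q τ z) (∫ τ in a..b, fderiv ℂ (q τ) x) x := by
  obtain ⟨r, hr, C, hC, hs, hb⟩ := h'.compact_bound isCompact_uIcc hV hx
  have hsub : uIoc a b ⊆ uIcc a b := uIoc_subset_uIcc
  refine intervalIntegral.hasFDerivAt_integral_of_dominated_of_fderiv_le (𝕜 := ℂ)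
    (F := fun z τ => q τ z) (F' := fun z τ => fderiv ℂ (q τ) z) (bound := fun _ => C)
    (s := ball x r) (ball_mem_nhds x hr) ?_ ?_ ?_ ?_ ?_ ?_
  · filter_upwards [hV.mem_nhds hx] with z hz
    exact ((h.slice hz).mono hsub).aestronglyMeasurable measurableSet_uIoc
  · exact (h.slice hx).intervalIntegrable
  · exact ((h'.slice hx).mono hsub).aestronglyMeasurable measurableSet_uIoc
  · exact Filter.Eventually.of_forall fun t ht z hz => hb t (hsub ht) z hz
  · exact intervalIntegrable_const
  · exact Filter.Eventually.of_forall fun t ht z hz =>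
      ((h.diff t (hsub ht)).differentiableAt (hV.mem_nhds (hs hz))).hasFDerivAt

theorem Base.integral_cont {V : Set E} {h : ℝ → E → F} (hh : Base univ V h) :
    ContinuousOn (fun x : ℝ × E => ∫ τ in (0:ℝ)..x.1, h τ x.2) (univ ×ˢ V) := by
  have h1 : Continuous (Function.uncurry (fun (u : V) (t : ℝ) => h t u)) :=
    hh.cont.comp_continuous (f := fun z : V × ℝ => (z.2, (z.1 : E))) (by fun_prop)
      (fun z => ⟨mem_univ _, z.1.2⟩)
  have h2 := intervalIntegral.continuous_parametric_primitive_of_continuous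
    (μ := MeasureTheory.volume) (a₀ := 0) h1
  rw [continuousOn_iff_continuous_domRestrict]
  exact h2.comp (f := fun z : ↥((univ : Set ℝ) ×ˢ V) => ((⟨z.1.2, z.2.2⟩ : V), z.1.1))
    (by fun_prop)

theorem Dk_mul {s : ℂ} (hs : s ∈ Dk) {t : ℝ} (ht : t ∈ Icc (0:ℝ) 1) : (t : ℂ) * s ∈ Dk := by
  rw [mem_ball_zero_iff] at *
  rw [norm_mul, Complex.norm_real, Real.norm_of_nonneg ht.1]
  nlinarith [norm_nonneg s, ht.2]

theorem Base.scaled_cont {V : Set E} {H : ℂ → E → F} (hh : Base Dk V H) :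
    ContinuousOn (fun x : ℂ × E => ∫ t in (0:ℝ)..1, H (t * x.1) x.2) (Dk ×ˢ V) := by
  let c : ℝ → ℝ := fun t => (projIcc (0:ℝ) 1 zero_le_one t : ℝ)
  have hc : Continuous c := by
    exact continuous_subtype_val.comp continuous_projIcc
  have h1 : Continuous (Function.uncurry (fun (z : ↥(Dk ×ˢ V)) (t : ℝ) => H (c t * z.1.1) z.1.2)) :=
    hh.cont.comp_continuous (f := fun z : ↥(Dk ×ˢ V) × ℝ => ((c z.2 : ℂ) * z.1.1.1, z.1.1.2))
      (by fun_prop)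
      (fun z => ⟨Dk_mul z.1.2.1 (projIcc (0:ℝ) 1 zero_le_one z.2).2, z.1.2.2⟩)
  have h2 := intervalIntegral.continuous_parametric_intervalIntegral_of_continuous'
    (μ := MeasureTheory.volume) h1 0 1
  rw [continuousOn_iff_continuous_domRestrict]
  convert h2 using 1
  funext z
  refine intervalIntegral.integral_congr fun t ht => ?_
  rw [uIcc_of_le zero_le_one] at ht
  simp only [c, projIcc_of_mem zero_le_one ht]

theorem Base.scale {V : Set E} {H : ℂ → E → F} (hh : Base Dk V H) {s : ℂ} (hs : s ∈ Dk) :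
    Base (uIcc (0:ℝ) 1) V (fun t u => H (t * s) u) := by
  rw [uIcc_of_le zero_le_one]
  refine ⟨hh.cont.comp (f := fun x : ℝ × E => ((x.1 : ℂ) * s, x.2)) (by fun_prop)
    (fun x hx => ⟨Dk_mul hs hx.1, hx.2⟩), fun t ht => hh.diff _ (Dk_mul hs ht)⟩

theorem Base.scaled {V : Set E} (hV : IsOpen V) {H : ℂ → E → F} (hh : Base Dk V H)
    (hh' : Base Dk V (fun s u => fderiv ℂ (H s) u)) :
    Base Dk V (fun s u => ∫ t in (0:ℝ)..1, H (t * s) u) :=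
  ⟨hh.scaled_cont, fun _ hs _ hu => ((hh.scale hs).hasFDerivAt_integral hV
    (hh'.scale hs) hu).differentiableAt.differentiableWithinAt⟩

theorem hasDerivAt_scaled [CompleteSpace F] {H H' : ℂ → F}
    (h : ∀ s ∈ Dk, HasDerivAt H (H' s) s) {s : ℂ} (hs : s ∈ Dk) :
    HasDerivAt (fun s => s • ∫ t in (0:ℝ)..1, H (t * s)) (H s) s := by
  have hd : DifferentiableOn ℂ H Dk := fun s hs => (h s hs).differentiableAt.differentiableWithinAt
  obtain ⟨g, hg0, hg⟩ := hd.isExactOn_ball.with_val_at 0 0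
  have e : ∀ s ∈ Dk, g s = s • ∫ t in (0:ℝ)..1, H (t * s) := by
    intro s hs
    have h1 : ∀ t ∈ uIcc (0:ℝ) 1, HasDerivAt (fun t : ℝ => g (t * s)) (s • H (t * s)) t := by
      intro t ht
      rw [uIcc_of_le zero_le_one] at ht
      have h2 := (hg _ (Dk_mul hs ht)).hasFDerivAt.restrictScalars ℝ
      have h3 : HasDerivAt (fun t : ℝ => (t : ℂ) * s) s t := by
        simpa using ((hasDerivAt_id t).ofReal_comp.mul_const s)
      have := h2.comp_hasDerivAt t h3
      simpa [Function.comp_def] using this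
    have h4 : ContinuousOn (fun t : ℝ => s • H (t * s)) (uIcc (0:ℝ) 1) := by
      rw [uIcc_of_le zero_le_one]
      exact (hd.continuousOn.comp (f := fun t : ℝ => (t : ℂ) * s) (by fun_prop)
        (fun t ht => Dk_mul hs ht)).const_smul s
    have := intervalIntegral.integral_eq_sub_of_hasDerivAt h1 h4.intervalIntegrable
    rw [intervalIntegral.integral_smul] at this
    rw [this]
    simp [hg0]
  refine (hg s hs).congr_of_eventuallyEq ?_
  filter_upwards [isOpen_ball.mem_nhds hs] with z hz using (e z hz).symm

theorem Jt.const_smul {V : Set E} {p : ℕ} (c : ℝ) : ∀ {g : ℝ → E → F} {G : ℝ → ℂ → E → F},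
    Jt V p g G → Jt V p (fun θ u => c • g θ u) (fun θ s u => c • G θ s u) := by
  intro g G h
  have := Jt.clm_apply (Jt.const (V := V) (p := p) (differentiableOn_const
    (c := ((c : ℂ) • ContinuousLinearMap.id ℂ F)))) h
  exact this

theorem Jt.prim [CompleteSpace F] {V : Set E} (hV : IsOpen V) {p : ℕ}
    {h : ℝ → E → F} {H : ℝ → ℂ → E → F} (hh : Jt V (p+1) h H) :
    Jt V (p+2) (fun θ u => ∫ τ in (0:ℝ)..θ, h τ u)
      (fun θ s u => (∫ τ in (0:ℝ)..θ, h τ u) + s • ∫ t in (0:ℝ)..1, H θ (t * s) u) := by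
  have hf := (hh.fderiv hV).zero
  have h0 := hh.zero
  have hb : Base univ V (fun θ u => ∫ τ in (0:ℝ)..θ, h τ u) :=
    ⟨h0.1.integral_cont, fun θ _ u hu => ((h0.1.monoI (subset_univ _)).hasFDerivAt_integral hV
      (hf.1.monoI (subset_univ _)) hu).differentiableAt.differentiableWithinAt⟩
  refine ⟨⟨hb, fun θ => ?_, fun θ u hu => by simp⟩, h, H, ?_, ?_, hh⟩
  · have h1 := (h0.2.1 θ).scaled hV (hf.2.1 θ)
    have h2 : Base Dk V (fun _ : ℂ => fun u => ∫ τ in (0:ℝ)..θ, h τ u) :=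
      Base.const (hb.diff θ (mem_univ θ))
    exact ⟨h2.cont.add (continuousOn_fst.smul h1.cont), fun s hs =>
      (h2.diff s hs).add ((h1.diff s hs).const_smul s)⟩
  · intro θ u hu
    have hc : Continuous (fun t => h t u) := by
      rw [← continuousOn_univ]; exact h0.1.slice hu
    exact intervalIntegral.integral_hasDerivAt_right (hc.intervalIntegrable _ _)
      (hc.stronglyMeasurableAtFilter _ _) hc.continuousAt
  · obtain ⟨_, h', H', _, k2, _⟩ := hh
    intro θ s hs u hu
    exact (hasDerivAt_scaled (fun s hs => k2 θ s hs u hu) hs).const_add _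

end Strob


namespace Strob

open Set Metric Filter Topology

universe u


variable {E F G : Type u} [NormedAddCommGroup E] [NormedSpace ℂ E]
  [NormedAddCommGroup F] [NormedSpace ℂ F] [NormedAddCommGroup G] [NormedSpace ℂ G]

theorem Base.of_bound {W : Set E} (hW : IsOpen W) {g : ℝ → E → F} {B : ℝ}
    (hd : ∀ θ, DifferentiableOn ℂ (g θ) W) (hb : ∀ θ, ∀ u ∈ W, ‖g θ u‖ ≤ B)
    (hc : ∀ u ∈ W, Continuous (fun θ => g θ u)) : Base univ W g := by
  refine ⟨?_, fun θ _ => hd θ⟩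
  rintro ⟨t, x⟩ ⟨_, hx⟩
  apply ContinuousAt.continuousWithinAt
  obtain ⟨r, hr, hs⟩ := Metric.isOpen_iff.1 hW x hx
  have hB : 0 ≤ B := (norm_nonneg _).trans (hb t x hx)
  have h1 : Tendsto (fun z : ℝ × E => g z.1 x) (𝓝 (t, x)) (𝓝 (g t x)) :=
    ((hc x hx).tendsto t).comp continuousAt_fst.tendsto
  have h2 : Tendsto (fun z : ℝ × E => g z.1 z.2 - g z.1 x) (𝓝 (t, x)) (𝓝 0) := by
    have h0 : Tendsto (fun z : ℝ × E => B / (r / 2) * ‖z.2 - x‖) (𝓝 (t, x)) (𝓝 0) := by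
      have : Continuous (fun z : ℝ × E => B / (r / 2) * ‖z.2 - x‖) := by fun_prop
      simpa using this.tendsto (t, x)
    refine squeeze_zero_norm' ?_ h0
    have hn : univ ×ˢ closedBall x (r / 2) ∈ 𝓝 (t, x) :=
      prod_mem_nhds univ_mem (closedBall_mem_nhds x (by positivity))
    filter_upwards [hn] with z hz
    refine cauchy_lip (c := x) (a := r / 2) (by positivity) hB ?_ ?_
      (mem_closedBall_self (by positivity)) hz.2
    · rw [add_halves]; exact (hd _).mono hs
    · rw [add_halves]; exact fun w hw => hb _ _ (hs hw)
  have := h2.add h1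
  simpa [ContinuousAt] using this

/-- Taylor polynomial in the auxiliary variable. -/
noncomputable def tay (d : ℕ → ℝ → E → F) (m : ℕ) (θ : ℝ) (s : ℂ) (u : E) : F :=
  ∑ i ∈ Finset.range (m + 1), (s ^ i / (i.factorial : ℂ)) • d i θ u

theorem tay_zero (d : ℕ → ℝ → E → F) (m : ℕ) (θ : ℝ) (u : E) : tay d m θ 0 u = d 0 θ u := by
  rw [tay, Finset.sum_range_succ']
  simp

theorem tay_base {W : Set E} {d : ℕ → ℝ → E → F} {m : ℕ} 
    (hd : ∀ i ≤ m, ∀ θ, DifferentiableOn ℂ (d i θ) W) (θ : ℝ) (I : Set ℂ) : Base I W (tay d m θ) := by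
  constructor
  · unfold tay
    refine continuousOn_finsetSum _ fun i hi => ?_
    have hi : i ≤ m := by simpa [Nat.lt_succ_iff] using hi
    refine ContinuousOn.smul (by fun_prop) ?_
    exact (hd i hi θ).continuousOn.comp continuousOn_snd (fun x hx => hx.2)
  · intro s _
    unfold tay
    refine DifferentiableOn.fun_sum fun i hi => ?_
    have hi : i ≤ m := by simpa [Nat.lt_succ_iff] using hi
    exact (hd i hi θ).const_smul _

theorem tay_deriv (d : ℕ → ℝ → E → F) (m : ℕ) (θ : ℝ) (s : ℂ) (u : E) :
    HasDerivAt (fun z => tay d (m + 1) θ z u) (tay (fun i => d (i + 1)) m θ s u) s := by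
  unfold tay
  have h : ∀ i ∈ Finset.range (m + 1 + 1), HasDerivAt (fun z : ℂ => (z ^ i / (i.factorial : ℂ)) • d i θ u)
      ((i * s ^ (i - 1) / (i.factorial : ℂ)) • d i θ u) s := by
    intro i _
    exact ((hasDerivAt_pow i s).div_const _).smul_const _
  convert HasDerivAt.fun_sum h using 1
  rw [Finset.sum_range_succ' _ (m + 1)]
  simp only [Nat.cast_zero, zero_mul, zero_div, zero_smul, add_zero]
  refine Finset.sum_congr rfl fun i _ => ?_
  congr 1
  have h1 : ((i.factorial : ℕ) : ℂ) ≠ 0 := by exact_mod_cast i.factorial_ne_zero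
  have h2 : ((i : ℂ) + 1) ≠ 0 := by exact_mod_cast i.succ_ne_zero
  rw [Nat.factorial_succ]
  push_cast
  field_simp

theorem Jt.taylor {W : Set E} (hW : IsOpen W) {B : ℝ} {m : ℕ} : ∀ {d : ℕ → ℝ → E → F},
    (∀ i ≤ m, ∀ θ, DifferentiableOn ℂ (d i θ) W) →
    (∀ i ≤ m, ∀ θ, ∀ u ∈ W, ‖d i θ u‖ ≤ B) →
    (∀ i ≤ m, ∀ u ∈ W, Continuous (fun θ => d i θ u)) →
    (∀ i < m, ∀ θ, ∀ u ∈ W, HasDerivAt (fun τ => d i τ u) (d (i + 1) θ u) θ) →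
    Jt W m (d 0) (tay d m) := by
  induction m with
  | zero =>
    intro d hd hb hc hD
    exact ⟨Base.of_bound hW (hd 0 le_rfl) (hb 0 le_rfl) (hc 0 le_rfl),
      fun θ => tay_base hd θ _, fun θ u _ => tay_zero d 0 θ u⟩
  | succ m ih =>
    intro d hd hb hc hD
    refine ⟨⟨Base.of_bound hW (hd 0 (by omega)) (hb 0 (by omega)) (hc 0 (by omega)),
      fun θ => tay_base hd θ _, fun θ u _ => tay_zero d _ θ u⟩, d 1, tay (fun i => d (i + 1)) m,
      fun θ u hu => hD 0 (by omega) θ u hu, fun θ s _ u _ => tay_deriv d m θ s u, ?_⟩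
    exact ih (d := fun i => d (i + 1)) (fun i hi => hd (i+1) (by omega))
      (fun i hi => hb (i+1) (by omega)) (fun i hi => hc (i+1) (by omega))
      (fun i hi => hD (i+1) (by omega))

theorem tay_bound {d : ℕ → ℝ → E → F} {m : ℕ} {M : ℝ} {θ : ℝ} {s : ℂ} {u : E} (hM : 0 ≤ M)
    (hs : s ∈ Dk) (hb : ∀ i ≤ m, (3:ℝ) ^ i / i.factorial * ‖d i θ u‖ ≤ M) :
    ‖tay d m θ s u‖ ≤ 6 / 5 * M := by
  have hs' : ‖s‖ ≤ 1 / 2 := by rw [mem_ball_zero_iff] at hs; exact hs.le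
  have h1 : ‖tay d m θ s u‖ ≤ ∑ i ∈ Finset.range (m + 1), M * (1 / 6 : ℝ) ^ i := by
    refine norm_sum_le_of_le _ fun i hi => ?_
    have hi : i ≤ m := by simpa [Nat.lt_succ_iff] using hi
    rw [norm_smul, norm_div, norm_pow, Complex.norm_natCast]
    have h2 : (1/6:ℝ)^i = (1/2)^i * (1/3)^i := by rw [← mul_pow]; norm_num
    have hf : (0:ℝ) < i.factorial := by positivity
    have h3 : ‖d i θ u‖ / i.factorial ≤ M * (1/3)^i := by
      have := mul_le_mul_of_nonneg_right (hb i hi) (show (0:ℝ) ≤ (1/3)^i by positivity)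
      refine le_trans (le_of_eq ?_) this
      have : (3:ℝ)^i * (1/3)^i = 1 := by rw [← mul_pow]; norm_num
      calc ‖d i θ u‖ / i.factorial = ((3:ℝ)^i * (1/3)^i) * (‖d i θ u‖ / i.factorial) := by
            rw [this, one_mul]
        _ = _ := by ring
    calc ‖s‖ ^ i / i.factorial * ‖d i θ u‖ = ‖s‖ ^ i * (‖d i θ u‖ / i.factorial) := by ring
      _ ≤ (1/2) ^ i * (M * (1/3)^i) := by gcongr
      _ = _ := by rw [h2]; ring
  refine h1.trans ?_
  rw [← Finset.mul_sum, mul_comm]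
  refine mul_le_mul_of_nonneg_right ?_ hM
  have h4 : ∀ k : ℕ, ∑ i ∈ Finset.range k, (1/6:ℝ)^i ≤ 6/5 := by
    intro k
    rw [geom_sum_eq (by norm_num)]
    have : (0:ℝ) ≤ (1/6)^k := by positivity
    rw [div_le_iff_of_neg (by norm_num)]
    linarith
  exact h4 _

end Strob


namespace Strob

open Set Metric Filter Topology

universe u


variable {E : Type u} [NormedAddCommGroup E] [NormedSpace ℂ E]

/-- Standing data. -/
structure Dat (q : ℕ) (f : ℝ → E → E) (fs : ℝ → ℂ → E → E) (c : E) (R M r ε : ℝ) : Prop where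
  jet : Jt (ball c R) (q + 1) f fs
  fb : ∀ θ, ∀ u ∈ ball c R, ‖f θ u‖ ≤ M
  fsb : ∀ θ, ∀ s ∈ Dk, ∀ u ∈ ball c R, ‖fs θ s u‖ ≤ 6 / 5 * M
  per : ∀ θ u, f (θ + 1) u = f θ u
  hM : 0 < M
  hr : 0 < r
  hε : 0 < ε
  hμ : ε * M ≤ r / 8

/-- Invariant of the iteration on the ball of radius `ρ`. -/
structure Inv (q : ℕ) (c : E) (R r ρ : ℝ) (φ : ℝ → E → E) (P : ℝ → ℂ → E → E) : Prop where
  jet : Jt (ball c ρ) (q + 2) φ P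
  per : ∀ θ, ∀ u ∈ ball c ρ, φ (θ + 1) u = φ θ u
  near : ∀ θ, ∀ u ∈ ball c ρ, ‖φ θ u - u‖ ≤ r / 2
  nearP : ∀ θ, ∀ s ∈ Dk, ∀ u ∈ ball c ρ, ‖P θ s u - u‖ ≤ 4 / 5 * r
  maps : ∀ θ, ∀ u ∈ ball c ρ, φ θ u ∈ ball c R
  mapsP : ∀ θ, ∀ s ∈ Dk, ∀ u ∈ ball c ρ, P θ s u ∈ ball c R

theorem Inv.mono {q : ℕ} {c : E} {R r ρ ρ' : ℝ} {φ : ℝ → E → E} {P : ℝ → ℂ → E → E}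
    (h : Inv q c R r ρ φ P) (hρ : ρ' ≤ ρ) : Inv q c R r ρ' φ P := by
  have hs := ball_subset_ball (x := c) hρ
  exact ⟨h.jet.mono hs, fun θ u hu => h.per θ u (hs hu), fun θ u hu => h.near θ u (hs hu),
    fun θ s hs' u hu => h.nearP θ s hs' u (hs hu), fun θ u hu => h.maps θ u (hs hu),
    fun θ s hs' u hu => h.mapsP θ s hs' u (hs hu)⟩

theorem ball_sub {c u : E} {ρ r : ℝ} (hu : u ∈ closedBall c (ρ - r)) : ball u r ⊆ ball c ρ := by
  intro w hw
  rw [mem_ball] at *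
  rw [mem_closedBall] at hu
  linarith [dist_triangle w u c]

theorem fderiv_near {g : E → E} {c u : E} {ρ r C : ℝ} (hr : 0 < r) (hC : 0 ≤ C)
    (hg : DifferentiableOn ℂ g (ball c ρ)) (hb : ∀ w ∈ ball c ρ, ‖g w - w‖ ≤ C)
    (hu : u ∈ closedBall c (ρ - r)) : ‖fderiv ℂ g u - 1‖ ≤ C / r := by
  have hs := ball_sub hu
  have hd : DifferentiableAt ℂ g u := (hg.mono hs).differentiableAt (ball_mem_nhds u hr)
  have e : fderiv ℂ g u - 1 = fderiv ℂ (fun w => g w - w) u :=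
    ((hd.hasFDerivAt.sub (hasFDerivAt_id u)).fderiv).symm
  rw [e]
  exact cauchy_fderiv hr hC ((hg.sub differentiableOn_id).mono hs) (fun z hz => hb z (hs hz))

theorem isInvertible_of_near [CompleteSpace E] {A : E →L[ℂ] E} (h : ‖A - 1‖ ≤ 1 / 2) :
    A.IsInvertible := by
  have h1 : IsUnit (1 - (1 - A)) := isUnit_one_sub_of_norm_lt_one (by
    rw [norm_sub_rev]; linarith)
  rw [sub_sub_cancel] at h1
  obtain ⟨w, rfl⟩ := h1
  exact ⟨ContinuousLinearEquiv.unitsEquiv ℂ E w, rfl⟩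

theorem norm_le_of_near {A : E →L[ℂ] E} (h : ‖A - 1‖ ≤ 1 / 2) (v : E) : ‖v‖ ≤ 2 * ‖A v‖ := by
  have h1 : v = A v - (A - 1) v := by simp
  have h2 : ‖(A - 1) v‖ ≤ 1 / 2 * ‖v‖ := (A - 1).le_of_opNorm_le h v
  have h3 : ‖v‖ ≤ ‖A v‖ + ‖(A - 1) v‖ := by
    conv_lhs => rw [h1]
    exact norm_sub_le _ _
  linarith

theorem apply_le_of_near {A : E →L[ℂ] E} {C : ℝ} (h : ‖A - 1‖ ≤ C) (v : E) :
    ‖A v‖ ≤ (1 + C) * ‖v‖ := by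
  have h1 : A v = v + (A - 1) v := by simp
  have h2 : ‖(A - 1) v‖ ≤ C * ‖v‖ := (A - 1).le_of_opNorm_le h v
  rw [h1]
  linarith [norm_add_le v ((A - 1) v)]

section

variable {q : ℕ} {f : ℝ → E → E} {fs : ℝ → ℂ → E → E} {c : E} {R M r ε : ℝ}
  {ρ : ℝ} {φ : ℝ → E → E} {P : ℝ → ℂ → E → E}

/-- The averaged derivative. -/
noncomputable def avA (φ : ℝ → E → E) (u : E) : E →L[ℂ] E := ∫ θ in (0:ℝ)..1, fderiv ℂ (φ θ) u

theorem Inv.fderiv_base [CompleteSpace E] (I : Inv q c R r ρ φ P) :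
    Base univ (ball c ρ) (fun θ u => fderiv ℂ (φ θ) u) := (I.jet.fderiv isOpen_ball).zero.1

theorem Inv.hasFDerivAt_avg [CompleteSpace E] (I : Inv q c R r ρ φ P) {u : E} (hu : u ∈ ball c ρ) :
    HasFDerivAt (thAvg φ) (avA φ u) u :=
  (I.jet.zero.1.monoI (subset_univ _)).hasFDerivAt_integral isOpen_ball
    (I.fderiv_base.monoI (subset_univ _)) hu

theorem Inv.d_near (D : Dat q f fs c R M r ε) (I : Inv q c R r ρ φ P) {u : E}
    (hu : u ∈ closedBall c (ρ - r)) (θ : ℝ) : ‖fderiv ℂ (φ θ) u - 1‖ ≤ 1 / 2 := by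
  have hr := D.hr
  have := fderiv_near hr (by positivity) (I.jet.zero.1.diff θ (mem_univ θ)) (I.near θ) hu
  refine this.trans (le_of_eq ?_)
  field_simp

theorem Inv.dP_near (D : Dat q f fs c R M r ε) (I : Inv q c R r ρ φ P) {u : E}
    (hu : u ∈ closedBall c (ρ - r)) (θ : ℝ) {s : ℂ} (hs : s ∈ Dk) :
    ‖fderiv ℂ (P θ s) u - 1‖ ≤ 4 / 5 := by
  have hr := D.hr
  have := fderiv_near hr (by positivity) ((I.jet.zero.2.1 θ).diff s hs) (I.nearP θ s hs) hu
  refine this.trans (le_of_eq ?_)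
  field_simp

theorem mem_of_closed (D : Dat q f fs c R M r ε) {u : E} (hu : u ∈ closedBall c (ρ - r)) :
    u ∈ ball c ρ := ball_sub hu (mem_ball_self D.hr)

theorem Inv.fd_int [CompleteSpace E] (I : Inv q c R r ρ φ P) {u : E} (hu : u ∈ ball c ρ) (a b : ℝ) :
    IntervalIntegrable (fun θ => fderiv ℂ (φ θ) u) MeasureTheory.volume a b :=
  ((I.fderiv_base.slice hu).mono (subset_univ _)).intervalIntegrable

theorem Inv.avA_near [CompleteSpace E] (D : Dat q f fs c R M r ε) (I : Inv q c R r ρ φ P) {u : E}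
    (hu : u ∈ closedBall c (ρ - r)) : ‖avA φ u - 1‖ ≤ 1 / 2 := by
  have h1 : avA φ u - 1 = ∫ θ in (0:ℝ)..1, (fderiv ℂ (φ θ) u - 1) := by
    rw [intervalIntegral.integral_sub (I.fd_int (mem_of_closed D hu) _ _) intervalIntegrable_const]
    simp [avA]
  rw [h1]
  have := intervalIntegral.norm_integral_le_of_norm_le_const (a := (0:ℝ)) (b := 1) (C := 1 / 2)
    (f := fun θ => fderiv ℂ (φ θ) u - 1) (fun θ _ => I.d_near D hu θ)
  simpa using this

theorem Inv.comp_jet [CompleteSpace E] (D : Dat q f fs c R M r ε) (I : Inv q c R r ρ φ P) :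
    Jt (ball c ρ) (q + 1) (fun θ u => f θ (φ θ u)) (fun θ s u => fs θ s (P θ s u)) :=
  Jt.comp isOpen_ball I.jet.of_succ I.maps I.mapsP D.jet

theorem Inv.avg_bound (D : Dat q f fs c R M r ε) (I : Inv q c R r ρ φ P)
    {u : E} (hu : u ∈ ball c ρ) : ‖thAvg (fun θ v => f θ (φ θ v)) u‖ ≤ M := by
  have := intervalIntegral.norm_integral_le_of_norm_le_const (a := (0:ℝ)) (b := 1) (C := M)
    (f := fun θ => f θ (φ θ u)) (fun θ _ => D.fb θ _ (I.maps θ u hu))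
  simpa [thAvg] using this

theorem Inv.ave_eq [CompleteSpace E] (D : Dat q f fs c R M r ε) (I : Inv q c R r ρ φ P)
    {u : E} (hu : u ∈ closedBall c (ρ - r)) :
    avA φ u (aveField f φ u) = thAvg (fun θ v => f θ (φ θ v)) u := by
  have h1 := isInvertible_of_near (I.avA_near D hu)
  unfold aveField
  rw [(I.hasFDerivAt_avg (mem_of_closed D hu)).fderiv]
  exact ((h1.inverse_apply_eq).1 rfl).symm

theorem Inv.ave_bound [CompleteSpace E] (D : Dat q f fs c R M r ε) (I : Inv q c R r ρ φ P)
    {u : E} (hu : u ∈ closedBall c (ρ - r)) : ‖aveField f φ u‖ ≤ 2 * M := by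
  refine (norm_le_of_near (I.avA_near D hu) _).trans ?_
  rw [I.ave_eq D hu]
  linarith [I.avg_bound D (mem_of_closed D hu)]

theorem Inv.avg_diff [CompleteSpace E] (D : Dat q f fs c R M r ε) (I : Inv q c R r ρ φ P) :
    DifferentiableOn ℂ (thAvg (fun θ v => f θ (φ θ v))) (ball c ρ) := by
  intro u hu
  have h := I.comp_jet D
  exact ((h.zero.1.monoI (subset_univ _)).hasFDerivAt_integral isOpen_ball
    ((h.fderiv isOpen_ball).zero.1.monoI (subset_univ _)) hu).differentiableAt.differentiableWithinAt

theorem Inv.ave_diff [CompleteSpace E] (D : Dat q f fs c R M r ε) (I : Inv q c R r ρ φ P) :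
    DifferentiableOn ℂ (aveField f φ) (ball c (ρ - r)) := by
  intro u hu
  apply DifferentiableAt.differentiableWithinAt
  have hu' := ball_subset_closedBall hu
  have hub := mem_of_closed D hu'
  have hA : DifferentiableAt ℂ (fderiv ℂ (thAvg φ)) u := by
    refine (fderiv_differentiableOn (isOpen_ball (x := c) (ε := ρ)) ?_).differentiableAt
      (isOpen_ball.mem_nhds hub)
    exact fun w hw => (I.hasFDerivAt_avg hw).differentiableAt.differentiableWithinAt
  have hi : (fderiv ℂ (thAvg φ) u).IsInvertible := by
    rw [(I.hasFDerivAt_avg hub).fderiv]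
    exact isInvertible_of_near (I.avA_near D hu')
  have h1 : DifferentiableAt ℂ (ContinuousLinearMap.inverse : (E →L[ℂ] E) → (E →L[ℂ] E))
      (fderiv ℂ (thAvg φ) u) := (hi.contDiffAt_map_inverse (n := 1)).differentiableAt (by simp)
  have h2 := h1.comp u hA
  exact h2.clm_apply ((I.avg_diff D).differentiableAt (isOpen_ball.mem_nhds hub))

/-- The right-hand side of the iteration. -/
noncomputable def hfun (f φ : ℝ → E → E) (θ : ℝ) (u : E) : E :=
  f θ (φ θ u) - fderiv ℂ (φ θ) u (aveField f φ u)

/-- Jet version of `hfun`. -/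
noncomputable def Hfun (f : ℝ → E → E) (fs : ℝ → ℂ → E → E) (φ : ℝ → E → E) (P : ℝ → ℂ → E → E)
    (θ : ℝ) (s : ℂ) (u : E) : E :=
  fs θ s (P θ s u) - fderiv ℂ (P θ s) u (aveField f φ u)

theorem Inv.h_jet [CompleteSpace E] (D : Dat q f fs c R M r ε) (I : Inv q c R r ρ φ P) :
    Jt (ball c (ρ - r)) (q + 1) (hfun f φ) (Hfun f fs φ P) := by
  have hs : ball c (ρ - r) ⊆ ball c ρ := ball_subset_ball (by linarith [D.hr])
  exact ((I.comp_jet D).mono hs).sub (((I.jet.fderiv isOpen_ball).mono hs).clm_apply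
    (Jt.const (I.ave_diff D)))

theorem Inv.h_bound [CompleteSpace E] (D : Dat q f fs c R M r ε) (I : Inv q c R r ρ φ P)
    {u : E} (hu : u ∈ closedBall c (ρ - r)) (θ : ℝ) : ‖hfun f φ θ u‖ ≤ 4 * M := by
  have h1 := D.fb θ _ (I.maps θ u (mem_of_closed D hu))
  have h2 := apply_le_of_near (I.d_near D hu θ) (aveField f φ u)
  have h3 := I.ave_bound D hu
  have h4 := norm_sub_le (f θ (φ θ u)) (fderiv ℂ (φ θ) u (aveField f φ u))
  unfold hfun
  linarith

theorem Inv.H_bound [CompleteSpace E] (D : Dat q f fs c R M r ε) (I : Inv q c R r ρ φ P)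
    {u : E} (hu : u ∈ closedBall c (ρ - r)) (θ : ℝ) {s : ℂ} (hs : s ∈ Dk) :
    ‖Hfun f fs φ P θ s u‖ ≤ 24 / 5 * M := by
  have h1 := D.fsb θ s hs _ (I.mapsP θ s hs u (mem_of_closed D hu))
  have h2 := apply_le_of_near (I.dP_near D hu θ hs) (aveField f φ u)
  have h3 := I.ave_bound D hu
  have h4 := norm_sub_le (fs θ s (P θ s u)) (fderiv ℂ (P θ s) u (aveField f φ u))
  unfold Hfun
  linarith

theorem Inv.h_per (D : Dat q f fs c R M r ε) (I : Inv q c R r ρ φ P)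
    {u : E} (hu : u ∈ closedBall c (ρ - r)) (θ : ℝ) : hfun f φ (θ + 1) u = hfun f φ θ u := by
  have hub := mem_of_closed D hu
  have e : fderiv ℂ (φ (θ + 1)) u = fderiv ℂ (φ θ) u := by
    apply Filter.EventuallyEq.fderiv_eq
    filter_upwards [isOpen_ball.mem_nhds hub] with v hv using I.per θ v hv
  unfold hfun
  rw [e, I.per θ u hub, D.per]

theorem Inv.h_slice [CompleteSpace E] (D : Dat q f fs c R M r ε) (I : Inv q c R r ρ φ P)
    {u : E} (hu : u ∈ closedBall c (ρ - r)) : Continuous (fun θ => hfun f φ θ u) := by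
  have hub := mem_of_closed D hu
  rw [← continuousOn_univ]
  exact ((I.comp_jet D).zero.1.slice hub).sub
    ((I.fderiv_base.slice hub).clm_apply continuousOn_const)

theorem Inv.h_mean [CompleteSpace E] (D : Dat q f fs c R M r ε) (I : Inv q c R r ρ φ P)
    {u : E} (hu : u ∈ closedBall c (ρ - r)) : ∫ θ in (0:ℝ)..1, hfun f φ θ u = 0 := by
  have hub := mem_of_closed D hu
  unfold hfun
  rw [intervalIntegral.integral_sub, ← ContinuousLinearMap.intervalIntegral_apply, sub_eq_zero]
  · exact (I.ave_eq D hu).symm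
  · exact I.fd_int hub _ _
  · exact (((I.comp_jet D).zero.1.slice hub).mono (subset_univ _)).intervalIntegrable
  · exact (((I.fderiv_base.slice hub).clm_apply continuousOn_const).mono
      (subset_univ _)).intervalIntegrable

end

end Strob


namespace Strob

open Set Metric Filter Topology

universe u


variable {E : Type u} [NormedAddCommGroup E] [NormedSpace ℂ E]

theorem prim_periodic {g : ℝ → E} (hg : Continuous g) (hp : ∀ θ, g (θ + 1) = g θ)
    (hm : ∫ θ in (0:ℝ)..1, g θ = 0) (θ : ℝ) :
    ∫ τ in (0:ℝ)..(θ + 1), g τ = ∫ τ in (0:ℝ)..θ, g τ := by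
  have hp' : Function.Periodic g 1 := hp
  have h1 := hp'.intervalIntegral_add_eq θ 0
  rw [zero_add, hm] at h1
  rw [← intervalIntegral.integral_add_adjacent_intervals (hg.intervalIntegrable 0 θ)
    (hg.intervalIntegrable θ (θ + 1)), h1, add_zero]

theorem prim_bound {g : ℝ → E} (hg : Continuous g) (hp : ∀ θ, g (θ + 1) = g θ)
    (hm : ∫ θ in (0:ℝ)..1, g θ = 0) {C : ℝ} (hC : ∀ θ, ‖g θ‖ ≤ C) (θ : ℝ) :
    ‖∫ τ in (0:ℝ)..θ, g τ‖ ≤ C := by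
  have hper : Function.Periodic (fun θ => ∫ τ in (0:ℝ)..θ, g τ) 1 := prim_periodic hg hp hm
  have h1 : (∫ τ in (0:ℝ)..θ, g τ) = ∫ τ in (0:ℝ)..(Int.fract θ), g τ := by
    have := hper.sub_int_mul_eq (x := θ) ⌊θ⌋
    simp only [mul_one] at this
    rw [← this]; rfl
  rw [h1]
  have h2 := intervalIntegral.norm_integral_le_of_norm_le_const (a := (0:ℝ)) (b := Int.fract θ)
    (C := C) (f := g) (fun θ _ => hC θ)
  have hC0 : 0 ≤ C := (norm_nonneg _).trans (hC 0)
  rw [sub_zero, abs_of_nonneg (Int.fract_nonneg θ)] at h2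
  nlinarith [Int.fract_lt_one θ, Int.fract_nonneg θ]

theorem scaled_bound {K : ℂ → E} {C : ℝ} (hC : ∀ s ∈ Dk, ‖K s‖ ≤ C) {s : ℂ} (hs : s ∈ Dk) :
    ‖s • ∫ t in (0:ℝ)..1, K (t * s)‖ ≤ 1 / 2 * C := by
  have h2 := intervalIntegral.norm_integral_le_of_norm_le_const (a := (0:ℝ)) (b := 1)
    (C := C) (f := fun t : ℝ => K (t * s)) (fun t ht => by
      rw [uIoc_of_le zero_le_one] at ht
      exact hC _ (Dk_mul hs ⟨ht.1.le, ht.2⟩))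
  simp only [sub_zero, abs_one, mul_one] at h2
  rw [norm_smul]
  have hs' : ‖s‖ ≤ 1 / 2 := by rw [mem_ball_zero_iff] at hs; exact hs.le
  gcongr

/-- Jets of the iteration. -/
noncomputable def PIter (f : ℝ → E → E) (fs : ℝ → ℂ → E → E) (ε : ℝ) : ℕ → ℝ → ℂ → E → E
  | 0 => fun _ _ u => u
  | k+1 => fun θ s u => u + ε • ((∫ τ in (0:ℝ)..θ, hfun f (PhiIter f ε k) τ u) +
      s • ∫ t in (0:ℝ)..1, Hfun f fs (PhiIter f ε k) (PIter f fs ε k) θ (t * s) u)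

theorem phi_succ (f : ℝ → E → E) (ε : ℝ) (k : ℕ) (θ : ℝ) (u : E) :
    PhiIter f ε (k + 1) θ u = u + ε • ∫ τ in (0:ℝ)..θ, hfun f (PhiIter f ε k) τ u := rfl

theorem P_succ (f : ℝ → E → E) (fs : ℝ → ℂ → E → E) (ε : ℝ) (k : ℕ) (θ : ℝ) (s : ℂ) (u : E) :
    PIter f fs ε (k + 1) θ s u = u + ε • ((∫ τ in (0:ℝ)..θ, hfun f (PhiIter f ε k) τ u) +
      s • ∫ t in (0:ℝ)..1, Hfun f fs (PhiIter f ε k) (PIter f fs ε k) θ (t * s) u) := rfl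

section

variable {q : ℕ} {f : ℝ → E → E} {fs : ℝ → ℂ → E → E} {c : E} {R M r ε : ℝ}
  {ρ : ℝ}

theorem inv_zero (D : Dat q f fs c R M r ε) :
    Inv q c R r R (PhiIter f ε 0) (PIter f fs ε 0) := by
  have hr := D.hr
  refine ⟨Jt.const (g := fun u : E => u) differentiableOn_id, fun _ _ _ => rfl, ?_, ?_,
    fun _ _ h => h, fun _ _ _ _ h => h⟩
  · intro θ u _
    simp only [PhiIter, sub_self, norm_zero]; positivity
  · intro θ s _ u _
    simp only [PIter, sub_self, norm_zero]; positivity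

theorem inv_succ [CompleteSpace E] (D : Dat q f fs c R M r ε) {k : ℕ} (hρ : ρ ≤ R)
    (I : Inv q c R r ρ (PhiIter f ε k) (PIter f fs ε k)) :
    Inv q c R r (ρ - r) (PhiIter f ε (k + 1)) (PIter f fs ε (k + 1)) := by
  have hr := D.hr
  have hε := D.hε
  have hM := D.hM
  have hμ := D.hμ
  have near : ∀ θ, ∀ u ∈ ball c (ρ - r), ‖PhiIter f ε (k + 1) θ u - u‖ ≤ r / 2 := by
    intro θ u hu
    have hu := ball_subset_closedBall hu
    have := prim_bound (I.h_slice D hu) (I.h_per D hu) (I.h_mean D hu) (I.h_bound D hu) θ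
    rw [phi_succ, add_sub_cancel_left, norm_smul, Real.norm_of_nonneg hε.le]
    have := mul_le_mul_of_nonneg_left this hε.le
    linarith
  have nearP : ∀ θ, ∀ s ∈ Dk, ∀ u ∈ ball c (ρ - r),
      ‖PIter f fs ε (k + 1) θ s u - u‖ ≤ 4 / 5 * r := by
    intro θ s hs u hu
    have hu := ball_subset_closedBall hu
    have h1 := prim_bound (I.h_slice D hu) (I.h_per D hu) (I.h_mean D hu) (I.h_bound D hu) θ
    have h2 := scaled_bound (fun s hs => I.H_bound D hu θ hs) hs
    rw [P_succ, add_sub_cancel_left, norm_smul, Real.norm_of_nonneg hε.le]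
    have := mul_le_mul_of_nonneg_left ((norm_add_le _ _).trans (add_le_add h1 h2)) hε.le
    linarith
  have hin : ∀ u ∈ ball c (ρ - r), ∀ v, ‖v - u‖ ≤ 4 / 5 * r → v ∈ ball c R := by
    intro u hu v hv
    rw [mem_ball] at *
    rw [← dist_eq_norm] at hv
    linarith [dist_triangle v u c]
  refine ⟨?_, ?_, near, nearP, fun θ u hu => hin u hu _ ((near θ u hu).trans (by linarith)),
    fun θ s hs u hu => hin u hu _ (nearP θ s hs u hu)⟩
  · exact (Jt.const (g := fun u : E => u) differentiableOn_id).add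
      (((I.h_jet D).prim isOpen_ball).const_smul ε)
  · intro θ u hu
    have hu := ball_subset_closedBall hu
    rw [phi_succ, phi_succ, prim_periodic (I.h_slice D hu) (I.h_per D hu) (I.h_mean D hu)]

/-- Difference of consecutive right-hand sides. -/
theorem diff_H [CompleteSpace E] (D : Dat q f fs c R M r ε) {φ φ' : ℝ → E → E}
    {P P' : ℝ → ℂ → E → E} (hρ : ρ ≤ R - r)
    (I : Inv q c R r ρ φ P) (I' : Inv q c R r ρ φ' P') {d : ℝ} (hd : 0 ≤ d)
    (h1 : ∀ θ, ∀ u ∈ ball c ρ, ‖φ' θ u - φ θ u‖ ≤ ε * d)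
    (h2 : ∀ θ, ∀ s ∈ Dk, ∀ u ∈ ball c ρ, ‖P' θ s u - P θ s u‖ ≤ 3 / 2 * (ε * d))
    {u : E} (hu : u ∈ closedBall c (ρ - r)) (θ : ℝ) {s : ℂ} (hs : s ∈ Dk) :
    ‖Hfun f fs φ' P' θ s u - Hfun f fs φ P θ s u‖ ≤ 16 * (ε * M / r) * d := by
  have hr := D.hr
  have hε := D.hε
  have hM := D.hM
  have hub := mem_of_closed D hu
  have hsb := ball_sub hu
  set μ := ε * M / r with hμ
  have hμ0 : 0 ≤ μ := by positivity
  have hcl : ∀ v, ‖v - u‖ ≤ 4 / 5 * r → v ∈ closedBall c (R - r) := by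
    intro v hv
    rw [mem_closedBall] at *
    rw [← dist_eq_norm] at hv
    linarith [dist_triangle v u c]
  have hrr : r / 2 ≤ 4 / 5 * r := by linarith
  -- averages
  have b1 : ∀ θ, ‖f θ (φ' θ u) - f θ (φ θ u)‖ ≤ μ * d := by
    intro θ
    have := cauchy_lip (g := f θ) (c := c) (a := R - r) hr hM.le
      (by rw [sub_add_cancel]; exact D.jet.zero.1.diff θ (mem_univ θ))
      (by rw [sub_add_cancel]; exact D.fb θ)
      (hcl _ ((I.near θ u hub).trans hrr)) (hcl _ ((I'.near θ u hub).trans hrr))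
    refine this.trans ((mul_le_mul_of_nonneg_left (h1 θ u hub) (by positivity)).trans (le_of_eq ?_))
    rw [hμ]; ring
  have b2 : ‖fs θ s (P' θ s u) - fs θ s (P θ s u)‖ ≤ 9 / 5 * (μ * d) := by
    have := cauchy_lip (g := fs θ s) (c := c) (a := R - r) (C := 6 / 5 * M) hr (by positivity)
      (by rw [sub_add_cancel]; exact (D.jet.zero.2.1 θ).diff s hs)
      (by rw [sub_add_cancel]; exact D.fsb θ s hs)
      (hcl _ (I.nearP θ s hs u hub)) (hcl _ (I'.nearP θ s hs u hub))
    refine this.trans ((mul_le_mul_of_nonneg_left (h2 θ s hs u hub)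
      (by positivity)).trans (le_of_eq ?_))
    rw [hμ]; ring
  have b3 : ∀ θ, ‖fderiv ℂ (φ' θ) u - fderiv ℂ (φ θ) u‖ ≤ ε * d / r := by
    intro θ
    have d1 := (I'.jet.zero.1.diff θ (mem_univ θ))
    have d2 := (I.jet.zero.1.diff θ (mem_univ θ))
    have e : fderiv ℂ (φ' θ) u - fderiv ℂ (φ θ) u = fderiv ℂ (fun w => φ' θ w - φ θ w) u :=
      (((d1.differentiableAt (isOpen_ball.mem_nhds hub)).hasFDerivAt.sub
        (d2.differentiableAt (isOpen_ball.mem_nhds hub)).hasFDerivAt).fderiv).symm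
    rw [e]
    exact cauchy_fderiv hr (by positivity) ((d1.sub d2).mono hsb) (fun z hz => h1 θ z (hsb hz))
  have b4 : ‖fderiv ℂ (P' θ s) u - fderiv ℂ (P θ s) u‖ ≤ 3 / 2 * (ε * d) / r := by
    have d1 := ((I'.jet.zero.2.1 θ).diff s hs)
    have d2 := ((I.jet.zero.2.1 θ).diff s hs)
    have e : fderiv ℂ (P' θ s) u - fderiv ℂ (P θ s) u = fderiv ℂ (fun w => P' θ s w - P θ s w) u :=
      (((d1.differentiableAt (isOpen_ball.mem_nhds hub)).hasFDerivAt.sub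
        (d2.differentiableAt (isOpen_ball.mem_nhds hub)).hasFDerivAt).fderiv).symm
    rw [e]
    exact cauchy_fderiv hr (by positivity) ((d1.sub d2).mono hsb) (fun z hz => h2 θ s hs z (hsb hz))
  have b5 : ‖avA φ' u - avA φ u‖ ≤ ε * d / r := by
    unfold avA
    rw [← intervalIntegral.integral_sub (I'.fd_int hub _ _) (I.fd_int hub _ _)]
    have := intervalIntegral.norm_integral_le_of_norm_le_const (a := (0:ℝ)) (b := 1)
      (C := ε * d / r) (f := fun θ => fderiv ℂ (φ' θ) u - fderiv ℂ (φ θ) u) (fun θ _ => b3 θ)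
    simpa using this
  have b6 : ‖thAvg (fun θ v => f θ (φ' θ v)) u - thAvg (fun θ v => f θ (φ θ v)) u‖ ≤ μ * d := by
    unfold thAvg
    rw [← intervalIntegral.integral_sub]
    · have := intervalIntegral.norm_integral_le_of_norm_le_const (a := (0:ℝ)) (b := 1)
        (C := μ * d) (f := fun θ => f θ (φ' θ u) - f θ (φ θ u)) (fun θ _ => b1 θ)
      simpa using this
    · exact (((I'.comp_jet D).zero.1.slice hub).mono (subset_univ _)).intervalIntegrable
    · exact (((I.comp_jet D).zero.1.slice hub).mono (subset_univ _)).intervalIntegrable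
  set v := aveField f φ u with hv
  set v' := aveField f φ' u with hv'
  have hvb : ‖v‖ ≤ 2 * M := I.ave_bound D hu
  have b7 : ‖v' - v‖ ≤ 6 * (μ * d) := by
    refine (norm_le_of_near (I'.avA_near D hu) _).trans ?_
    have e : avA φ' u (v' - v) = (thAvg (fun θ v => f θ (φ' θ v)) u -
        thAvg (fun θ v => f θ (φ θ v)) u) - (avA φ' u - avA φ u) v := by
      rw [map_sub, ContinuousLinearMap.sub_apply, I'.ave_eq D hu, I.ave_eq D hu]
      abel
    have h3 : ‖(avA φ' u - avA φ u) v‖ ≤ 2 * (μ * d) := by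
      refine ((avA φ' u - avA φ u).le_of_opNorm_le b5 v).trans ?_
      refine (mul_le_mul_of_nonneg_left hvb (by positivity)).trans (le_of_eq ?_)
      rw [hμ]; ring
    rw [e]
    linarith [norm_sub_le (thAvg (fun θ v => f θ (φ' θ v)) u -
        thAvg (fun θ v => f θ (φ θ v)) u) ((avA φ' u - avA φ u) v)]
  have b8 : ‖fderiv ℂ (P' θ s) u (v' - v)‖ ≤ 54 / 5 * (μ * d) := by
    have := apply_le_of_near (I'.dP_near D hu θ hs) (v' - v)
    linarith
  have b9 : ‖(fderiv ℂ (P' θ s) u - fderiv ℂ (P θ s) u) v‖ ≤ 3 * (μ * d) := by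
    refine ((fderiv ℂ (P' θ s) u - fderiv ℂ (P θ s) u).le_of_opNorm_le b4 v).trans ?_
    refine (mul_le_mul_of_nonneg_left hvb (by positivity)).trans (le_of_eq ?_)
    rw [hμ]; ring
  have e : Hfun f fs φ' P' θ s u - Hfun f fs φ P θ s u =
      (fs θ s (P' θ s u) - fs θ s (P θ s u)) - fderiv ℂ (P' θ s) u (v' - v)
        - (fderiv ℂ (P' θ s) u - fderiv ℂ (P θ s) u) v := by
    unfold Hfun
    rw [map_sub, ContinuousLinearMap.sub_apply]
    abel
  rw [e]
  have n1 := norm_sub_le ((fs θ s (P' θ s u) - fs θ s (P θ s u)) - fderiv ℂ (P' θ s) u (v' - v))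
    ((fderiv ℂ (P' θ s) u - fderiv ℂ (P θ s) u) v)
  have n2 := norm_sub_le (fs θ s (P' θ s u) - fs θ s (P θ s u)) (fderiv ℂ (P' θ s) u (v' - v))
  have : 0 ≤ μ * d := by positivity
  linarith

theorem Hfun_zero {φ : ℝ → E → E} {P : ℝ → ℂ → E → E}
    (D : Dat q f fs c R M r ε) (I : Inv q c R r ρ φ P)
    {u : E} (hu : u ∈ closedBall c (ρ - r)) (θ : ℝ) : Hfun f fs φ P θ 0 u = hfun f φ θ u := by
  have hub := mem_of_closed D hu
  have e : fderiv ℂ (P θ 0) u = fderiv ℂ (φ θ) u := by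
    apply Filter.EventuallyEq.fderiv_eq
    filter_upwards [isOpen_ball.mem_nhds hub] with v hv using I.jet.zero.2.2 θ v hv
  unfold Hfun hfun
  rw [e, I.jet.zero.2.2 θ u hub, D.jet.zero.2.2 θ _ (I.maps θ u hub)]

end

end Strob


namespace Strob

open Set Metric Filter Topology

universe u


variable {E : Type u} [NormedAddCommGroup E] [NormedSpace ℂ E]

section

variable {q : ℕ} {f : ℝ → E → E} {fs : ℝ → ℂ → E → E} {c : E} {R M r ε : ℝ}
  {ρ : ℝ}

theorem inv_all [CompleteSpace E] (D : Dat q f fs c R M r ε) (k : ℕ) :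
    Inv q c R r (R - k * r) (PhiIter f ε k) (PIter f fs ε k) := by
  have hr := D.hr
  induction k with
  | zero => simpa using inv_zero D
  | succ k ih =>
    have h : (R - ((k + 1 : ℕ) : ℝ) * r) = R - k * r - r := by push_cast; ring
    rw [h]
    exact inv_succ D (by have : (0:ℝ) ≤ k * r := by positivity
                         linarith) ih

theorem Inv.H_int [CompleteSpace E] {φ : ℝ → E → E} {P : ℝ → ℂ → E → E}
    (D : Dat q f fs c R M r ε) (I : Inv q c R r ρ φ P)
    {u : E} (hu : u ∈ ball c (ρ - r)) (θ : ℝ) {s : ℂ} (hs : s ∈ Dk) :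
    IntervalIntegrable (fun t : ℝ => Hfun f fs φ P θ (t * s) u) MeasureTheory.volume 0 1 := by
  apply ContinuousOn.intervalIntegrable
  have h1 := ((I.h_jet D).zero.2.1 θ).slice hu
  refine h1.comp (f := fun t : ℝ => (t : ℂ) * s) (by fun_prop) ?_
  intro t ht
  rw [uIcc_of_le zero_le_one] at ht
  exact Dk_mul hs ht

theorem iter_diff [CompleteSpace E] (D : Dat q f fs c R M r ε) {k : ℕ}
    (I : Inv q c R r ρ (PhiIter f ε k) (PIter f fs ε k))
    (I' : Inv q c R r ρ (PhiIter f ε (k + 1)) (PIter f fs ε (k + 1)))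
    {u : E} (hu : u ∈ ball c (ρ - r)) {C : ℝ}
    (hC : ∀ θ, ∀ s ∈ Dk, ‖Hfun f fs (PhiIter f ε (k + 1)) (PIter f fs ε (k + 1)) θ s u
      - Hfun f fs (PhiIter f ε k) (PIter f fs ε k) θ s u‖ ≤ C) :
    (∀ θ, ‖PhiIter f ε (k + 2) θ u - PhiIter f ε (k + 1) θ u‖ ≤ ε * C) ∧
    ∀ θ, ∀ s ∈ Dk, ‖PIter f fs ε (k + 2) θ s u - PIter f fs ε (k + 1) θ s u‖
      ≤ 3 / 2 * (ε * C) := by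
  have hε := D.hε
  have hu' := ball_subset_closedBall hu
  have c0 := I.h_slice D hu'
  have c1 := I'.h_slice D hu'
  have key : ∀ θ, ‖(∫ τ in (0:ℝ)..θ, hfun f (PhiIter f ε (k + 1)) τ u) -
      ∫ τ in (0:ℝ)..θ, hfun f (PhiIter f ε k) τ u‖ ≤ C := by
    intro θ
    rw [← intervalIntegral.integral_sub (c1.intervalIntegrable _ _) (c0.intervalIntegrable _ _)]
    refine prim_bound (g := fun τ => hfun f (PhiIter f ε (k + 1)) τ u - hfun f (PhiIter f ε k) τ u)
      (c1.sub c0) (fun θ => ?_) ?_ (fun θ => ?_) θ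
    · simp only [I.h_per D hu', I'.h_per D hu']
    · rw [intervalIntegral.integral_sub (c1.intervalIntegrable _ _) (c0.intervalIntegrable _ _),
        I.h_mean D hu', I'.h_mean D hu', sub_zero]
    · have := hC θ 0 zero_mem_Dk
      rwa [Hfun_zero D I hu', Hfun_zero D I' hu'] at this
  constructor
  · intro θ
    rw [phi_succ, phi_succ, add_sub_add_left_eq_sub, ← smul_sub, norm_smul,
      Real.norm_of_nonneg hε.le]
    exact mul_le_mul_of_nonneg_left (key θ) hε.le
  · intro θ s hs
    have h2 := scaled_bound (K := fun s => Hfun f fs (PhiIter f ε (k + 1)) (PIter f fs ε (k + 1)) θ s u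
      - Hfun f fs (PhiIter f ε k) (PIter f fs ε k) θ s u) (hC θ) hs
    rw [intervalIntegral.integral_sub (I'.H_int D hu θ hs) (I.H_int D hu θ hs), smul_sub] at h2
    rw [P_succ, P_succ, add_sub_add_left_eq_sub, ← smul_sub, norm_smul,
      Real.norm_of_nonneg hε.le, add_sub_add_comm]
    have := mul_le_mul_of_nonneg_left ((norm_add_le _ _).trans (add_le_add (key θ) h2)) hε.le
    linarith

/-- The size of the `k`-th increment. -/
noncomputable def dk (M r ε : ℝ) (k : ℕ) : ℝ := 24 / 5 * M * (16 * (ε * M / r)) ^ k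

theorem dk_nonneg (D : Dat q f fs c R M r ε) (k : ℕ) : 0 ≤ dk M r ε k := by
  have := D.hM
  have := D.hr
  have := D.hε
  unfold dk; positivity

theorem dk_succ (k : ℕ) : 16 * (ε * M / r) * dk M r ε k = dk M r ε (k + 1) := by
  unfold dk; ring

theorem diffs [CompleteSpace E] (D : Dat q f fs c R M r ε) (k : ℕ) :
    ∀ u ∈ ball c (R - (k + 1 : ℕ) * r),
    (∀ θ, ‖PhiIter f ε (k + 1) θ u - PhiIter f ε k θ u‖ ≤ ε * dk M r ε k) ∧
    ∀ θ, ∀ s ∈ Dk, ‖PIter f fs ε (k + 1) θ s u - PIter f fs ε k θ s u‖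
      ≤ 3 / 2 * (ε * dk M r ε k) := by
  have hr := D.hr
  have hε := D.hε
  have hM := D.hM
  induction k with
  | zero =>
    intro u hu
    have I := inv_zero D
    have hu : u ∈ ball c (R - r) := by simpa using hu
    have hu' := ball_subset_closedBall hu
    have h1 := prim_bound (I.h_slice D hu') (I.h_per D hu') (I.h_mean D hu') (I.h_bound D hu')
    have e : dk M r ε 0 = 24 / 5 * M := by simp [dk]
    rw [e]
    constructor
    · intro θ
      rw [phi_succ]
      change ‖u + _ - u‖ ≤ _
      rw [add_sub_cancel_left, norm_smul, Real.norm_of_nonneg hε.le]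
      exact mul_le_mul_of_nonneg_left ((h1 θ).trans (by linarith)) hε.le
    · intro θ s hs
      have h2 := scaled_bound (fun s hs => I.H_bound D hu' θ hs) hs
      rw [P_succ]
      change ‖u + _ - u‖ ≤ _
      rw [add_sub_cancel_left, norm_smul, Real.norm_of_nonneg hε.le]
      have := mul_le_mul_of_nonneg_left ((norm_add_le _ _).trans (add_le_add (h1 θ) h2)) hε.le
      have : 0 < ε * M := by positivity
      linarith
  | succ k ih =>
    intro u hu
    have e : R - ((k + 1 + 1 : ℕ) : ℝ) * r = R - ((k + 1 : ℕ) : ℝ) * r - r := by push_cast; ring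
    rw [e] at hu
    have hk : (0:ℝ) ≤ k * r := by positivity
    have I := (inv_all D k).mono (ρ' := R - ((k + 1 : ℕ) : ℝ) * r) (by push_cast; linarith)
    have I' := inv_all D (k + 1)
    refine iter_diff D I I' hu (fun θ s hs => ?_)
    rw [← dk_succ]
    exact diff_H D (by push_cast; linarith) I I' (dk_nonneg D k) (fun θ u hu => (ih u hu).1 θ)
      (fun θ s hs u hu => (ih u hu).2 θ s hs) (ball_subset_closedBall hu) θ hs

theorem final [CompleteSpace E] (D : Dat q f fs c R M r ε) {n : ℕ} (hn : 1 ≤ n)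
    (hR : R = (n + 1) * r) :
    ContDiff ℝ (q + 1 : ℕ) (fun θ => defect f ε n θ c) ∧
    ∀ ν ≤ q + 1, ∀ θ, ‖iteratedDeriv ν (fun τ => defect f ε n τ c) θ‖ ≤
      ν.factorial * 2 ^ ν * dk M r ε n := by
  have hr := D.hr
  have hε := D.hε
  have hM := D.hM
  obtain ⟨k, rfl⟩ : ∃ k, n = k + 1 := ⟨n - 1, by omega⟩
  have e1 : R - ((k + 1 : ℕ) : ℝ) * r = r := by rw [hR]; push_cast; ring
  have e0 : R - (k : ℝ) * r = r + r := by rw [hR]; push_cast; ring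
  have I0 := inv_all D k
  have I1 := inv_all D (k + 1)
  have dd := diffs D k
  rw [e1] at I1 dd
  rw [e0] at I0
  have hk : (0:ℝ) ≤ k * r := by positivity
  have hc : c ∈ ball c r := mem_ball_self hr
  have hc1 : c ∈ closedBall c (r - r) := by simp
  have hc0 : c ∈ closedBall c (r + r - r) := by simp [hr.le]
  set v := aveField f (PhiIter f ε (k + 1)) c with hv
  have J0 := I0.h_jet D
  rw [add_sub_cancel_right] at J0
  have J1 := (I1.comp_jet D).sub ((I1.jet.fderiv isOpen_ball).clm_apply
    (Jt.const (g := fun _ => v) (differentiableOn_const v)))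
  have J := J0.sub J1
  have hdef : (fun θ => defect f ε (k + 1) θ c) = fun θ => hfun f (PhiIter f ε k) θ c -
      (f θ (PhiIter f ε (k + 1) θ c) - fderiv ℂ (PhiIter f ε (k + 1) θ) c v) := by
    funext θ
    have hd : HasDerivAt (fun τ => PhiIter f ε (k + 1) τ c) (ε • hfun f (PhiIter f ε k) θ c) θ := by
      have := intervalIntegral.integral_hasDerivAt_right
        ((I0.h_slice D hc0).intervalIntegrable 0 θ)
        (I0.h_slice D hc0).aestronglyMeasurable.stronglyMeasurableAtFilter
        (I0.h_slice D hc0).continuousAt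
      exact (this.const_smul ε).const_add c
    unfold defect
    rw [hd.deriv, smul_smul, one_div, inv_mul_cancel₀ hε.ne', one_smul]
    abel
  rw [hdef]
  refine ⟨J.contDiff hc, fun ν hν θ => ?_⟩
  refine J.bound hc θ (fun s hs => ?_) ν hν
  rw [← dk_succ, norm_sub_rev]
  exact diff_H D (by rw [hR]; push_cast; linarith) (I0.mono (by linarith)) I1 (dk_nonneg D k)
    (fun θ u hu => (dd u hu).1 θ) (fun θ s hs u hu => (dd u hu).2 θ s hs) hc1 θ hs

end

/-- The local form of the theorem. -/
theorem local_main [CompleteSpace E] {fC : ℝ → E → E}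
    (hperC : ∀ u, Function.Periodic (fun θ => fC θ u) 1)
    (p : ℕ) (hp : 1 ≤ p) (R M : ℝ) (hR : 0 < R) (hM : 0 < M)
    (hcd : ∀ u, ContDiff ℝ p (fun θ => fC θ u)) (c : E)
    (hanal : ∀ ν ≤ p, ∀ θ : ℝ,
      DifferentiableOn ℂ (fun u => iteratedDeriv ν (fun τ => fC τ u) θ) (ball c R))
    (hbound : ∀ σ ∈ Set.Ioc (0:ℝ) 3, ∀ ν ≤ p, ∀ θ : ℝ, ∀ u ∈ ball c R,
      σ^ν / (Nat.factorial ν) * ‖iteratedDeriv ν (fun τ => fC τ u) θ‖ ≤ M)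
    (ε₀ : ℝ) (hε₀ : ε₀ = R / (8*M))
    (n : ℕ) (hn : 1 ≤ n) (ε : ℝ) (hε : 0 < ε) (hnε : (n+1 : ℝ) * ε ≤ ε₀)
    (Qp : ℝ) (hQp : Qp = 5 + 2^(p+1) * Real.exp (5/2) * (Nat.factorial p)) :
    ContDiff ℝ p (fun θ => defect fC ε n θ c) ∧
    ∀ ν ≤ p, ∀ θ : ℝ, ‖iteratedDeriv ν (fun τ => defect fC ε n τ c) θ‖ ≤
          2*M * (2 * Qp * (n+1) * ε / ε₀)^n := by
  obtain ⟨q, rfl⟩ : ∃ q, p = q + 1 := ⟨p - 1, by omega⟩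
  set d : ℕ → ℝ → E → E := fun i θ u => iteratedDeriv i (fun τ => fC τ u) θ with hd
  have hd0 : d 0 = fC := by funext θ u; simp [hd]
  have hn0 : (0:ℝ) < n + 1 := by positivity
  set r := R / (n + 1) with hrdef
  have hr : 0 < r := by positivity
  have hRr : R = (n + 1) * r := by rw [hrdef]; field_simp
  have hb : ∀ i ≤ q + 1, ∀ θ, ∀ u ∈ ball c R, ‖d i θ u‖ ≤ M * (q + 1).factorial := by
    intro i hi θ u hu
    have h := hbound 1 ⟨one_pos, by norm_num⟩ i hi θ u hu
    have hf : (0:ℝ) < i.factorial := by exact_mod_cast i.factorial_pos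
    rw [one_pow, one_div, inv_mul_le_iff₀ hf] at h
    have hf' : (i.factorial : ℝ) ≤ (q + 1).factorial := by exact_mod_cast Nat.factorial_le hi
    refine h.trans ?_
    rw [mul_comm]
    gcongr
  have jet : Jt (ball c R) (q + 1) (d 0) (tay d (q + 1)) := by
    refine Jt.taylor isOpen_ball hanal hb ?_ ?_
    · intro i hi u _
      exact (hcd u).continuous_iteratedDeriv i (by exact_mod_cast hi)
    · intro i hi θ u _
      have h1 := ((hcd u).differentiable_iteratedDeriv i (by exact_mod_cast hi)) θ
      have h2 := h1.hasDerivAt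
      rw [← iteratedDeriv_succ] at h2
      exact h2
  rw [hd0] at jet
  have hμ : ε * M ≤ r / 8 := by
    rw [hε₀, le_div_iff₀ (by positivity)] at hnε
    have : (n + 1) * (ε * M) ≤ (n + 1) * (r / 8) := by
      have : (n + 1) * (r / 8) = R / 8 := by rw [hRr]; ring
      rw [this]; linarith
    exact le_of_mul_le_mul_left this hn0
  have D : Dat q fC (tay d (q + 1)) c R M r ε := by
    refine ⟨jet, ?_, ?_, fun θ u => hperC u θ, hM, hr, hε, hμ⟩
    · intro θ u hu
      simpa using hbound 1 ⟨one_pos, by norm_num⟩ 0 (Nat.zero_le _) θ u hu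
    · intro θ s hs u hu
      exact tay_bound hM.le hs (fun i hi => hbound 3 ⟨by norm_num, le_rfl⟩ i hi θ u hu)
  obtain ⟨F1, F2⟩ := final D hn hRr
  refine ⟨F1, fun ν hν θ => (F2 ν hν θ).trans ?_⟩
  have hm0 : 0 ≤ 16 * (ε * M / r) := by positivity
  have e : 2 * Qp * (n + 1) * ε / ε₀ = Qp * (16 * (ε * M / r)) := by
    rw [hε₀, hRr]; field_simp; ring
  rw [e, mul_pow]
  have hexp : (7 / 2 : ℝ) ≤ Real.exp (5 / 2) := by linarith [Real.add_one_le_exp (5 / 2 : ℝ)]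
  have hf : (ν.factorial : ℝ) ≤ (q + 1).factorial := by exact_mod_cast Nat.factorial_le hν
  have h2 : (2:ℝ) ^ ν ≤ 2 ^ (q + 1) := pow_le_pow_right₀ (by norm_num) hν
  have hff : (ν.factorial : ℝ) * 2 ^ ν ≤ (q + 1).factorial * 2 ^ (q + 1) := by gcongr
  set A : ℝ := (q + 1).factorial * 2 ^ (q + 1) with hA
  have hA0 : 0 ≤ A := by positivity
  have hQ : Qp = 5 + 2 * A * Real.exp (5 / 2) := by rw [hQp, hA]; ring
  have hQA : 12 / 5 * A ≤ Qp := by rw [hQ]; nlinarith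
  have hQ1 : 1 ≤ Qp := by rw [hQ]; nlinarith
  have hQn : Qp ≤ Qp ^ n := le_self_pow₀ hQ1 (by omega)
  unfold dk
  calc (ν.factorial : ℝ) * 2 ^ ν * (24 / 5 * M * (16 * (ε * M / r)) ^ n)
      ≤ A * (24 / 5 * M * (16 * (ε * M / r)) ^ n) := by gcongr
    _ = 12 / 5 * A * (2 * M * (16 * (ε * M / r)) ^ n) := by ring
    _ ≤ Qp ^ n * (2 * M * (16 * (ε * M / r)) ^ n) := by
        gcongr; exact hQA.trans hQn
    _ = _ := by ring

theorem ball_sub_Kset {X : Type*} [NormedAddCommGroup X] [NormedSpace ℝ X]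
    (ι : X →ₗᵢ[ℝ] E) (K : Set X) {R : ℝ} {c : E} (hc : c ∈ Kset ι K R) :
    ball c R ⊆ Kset ι K (2 * R) := by
  obtain ⟨x, hx, w, hw, rfl⟩ := hc
  intro z hz
  refine ⟨x, hx, z - ι x, ?_, by abel⟩
  rw [mem_ball, dist_eq_norm] at hz
  have : z - ι x = (z - (ι x + w)) + w := by abel
  rw [this]
  linarith [norm_add_le (z - (ι x + w)) w]

end Strob

/-- Theorem: under Assumptions (K) and (A_p), with `ε₀ = R/(8M)` and `(n+1)ε ≤ ε₀`,
the defect `δ^[n]` is `p` times continuously differentiable in `θ` and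
`‖δ^[n]‖_{R,p} ≤ 2M (2 𝒬_p (n+1) ε/ε₀)^n` with `𝒬_p = 5 + 2^{p+1} e^{5/2} p!`. -/
theorem statement5
    {X Xc : Type*} [NormedAddCommGroup X] [NormedSpace ℝ X] [CompleteSpace X]
    [NormedAddCommGroup Xc] [NormedSpace ℂ Xc] [CompleteSpace Xc]
    (ι : X →ₗᵢ[ℝ] Xc)
    (K U0 : Set X) (hKopen : IsOpen K) (hKbdd : Bornology.IsBounded (closure K))
    (hU0open : IsOpen U0) (hU0K : U0 ⊆ K)
    (fX : ℝ → X → X) (fC : ℝ → Xc → Xc)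
    (hper : ∀ u, Function.Periodic (fun θ => fX θ u) 1)
    (hperC : ∀ u, Function.Periodic (fun θ => fC θ u) 1)
    -- Assumption (K)
    (hAssK : ∀ u₀ ∈ U0, ∀ ε ∈ Set.Ioc (0:ℝ) 1, ∃ u : ℝ → X, u 0 = u₀ ∧
      ∀ t ∈ Set.Icc (0:ℝ) 1, HasDerivAt u (fX (t/ε) (u t)) t ∧ u t ∈ K)
    -- Assumption (A_p)
    (p : ℕ) (hp : 1 ≤ p)
    (R M : ℝ) (hR : 0 < R) (hM : 0 < M)
    (hcontdiffθ : ∀ u, ContDiff ℝ p (fun θ => fC θ u))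
    (hext : ∀ θ, ∀ x : X, ι x ∈ Kset ι K (2*R) → fC θ (ι x) = ι (fX θ x))
    (hanal : ∀ ν ≤ p, ∀ θ : ℝ,
      AnalyticOn ℂ (fun u => iteratedDeriv ν (fun τ => fC τ u) θ) (Kset ι K (2*R)))
    (hbound : ∀ σ ∈ Set.Ioc (0:ℝ) 3, ∀ ν ≤ p, ∀ θ : ℝ, ∀ u ∈ Kset ι K (2*R),
      σ^ν / (Nat.factorial ν) * ‖iteratedDeriv ν (fun τ => fC τ u) θ‖ ≤ M)
    -- the regime of the theorem
    (ε₀ : ℝ) (hε₀ : ε₀ = R / (8*M))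
    (n : ℕ) (hn : 1 ≤ n) (ε : ℝ) (hε : 0 < ε) (hnε : (n+1 : ℝ) * ε ≤ ε₀)
    -- the constant 𝒬_p
    (Qp : ℝ) (hQp : Qp = 5 + 2^(p+1) * Real.exp (5/2) * (Nat.factorial p)) :
    -- δ^[n] is p times continuously differentiable w.r.t. θ
    (∀ u ∈ Kset ι K R, ContDiff ℝ p (fun θ => defect fC ε n θ u)) ∧
    -- ‖δ^[n]‖_{R,p} ≤ 2M (2 𝒬_p (n+1) ε/ε₀)^n
    (∀ ν ≤ p, ∀ θ : ℝ, ∀ u ∈ Kset ι K R,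
        ‖iteratedDeriv ν (fun τ => defect fC ε n τ u) θ‖ ≤
          2*M * (2 * Qp * (n+1) * ε / ε₀)^n) := by
  have key : ∀ u ∈ Kset ι K R, _ := fun u hu =>
    Strob.local_main hperC p hp R M hR hM hcontdiffθ u
      (fun ν hν θ => ((hanal ν hν θ).mono (Strob.ball_sub_Kset ι K hu)).differentiableOn)
      (fun σ hσ ν hν θ w hw => hbound σ hσ ν hν θ w (Strob.ball_sub_Kset ι K hu hw))
      ε₀ hε₀ n hn ε hε hnε Qp hQp
  exact ⟨fun u hu => (key u hu).1, fun ν hν θ u hu => (key u hu).2 ν hν θ⟩
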